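/- arXiv:2311.12318 — 14 statements merged into one kernel-verified Lean document; each statement's English description precedes it below -/
import Mathlib

section
/- Let N be a positive integer divisible by 3, and let A be a 3-cube-free subset of Z_N. Then 3·|A| ≤ 2·N (i.e., |A| ≤ 2N/3). -/
/-- `A ⊆ ZMod N` is `d`-cube-free: there is no multiset (encoded as `a : Fin d → ZMod N`)
whose projective `d`-cube (all nonempty subset sums) is contained in `A`. -/
def IsCubeFree (N d : ℕ) (A : Finset (ZMod N)) : Prop :=
  ¬ ∃ a : Fin d → ZMod N, ∀ I : Finset (Fin d), I.Nonempty → (∑ i ∈ I, a i) ∈ A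

/-!
Suppose `A` has more than two thirds of the elements of the group. Doubling is at most two-to-one
and `A` is more than twice as large as its complement, so some `a ∈ A` has `2a ∈ A`. The
complements of `A`, `A - a` and `A - 2a` are too small to cover the group, so there is `c` with
`c, c + a, c + 2a ∈ A`. The projective cube generated by `a, a, c` consists of
`a, 2a, c, c + a, c + 2a`.
-/

open scoped Finset

section

variable {G H : Type*}

theorem card_filter_map_eq_le_card_ker [AddGroup G] [Fintype G] [AddGroup H] [DecidableEq H]
    (f : G →+ H) (A : Finset G) (y : H) : #{x ∈ A | f x = y} ≤ #{x | f x = 0} := by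
  obtain hempty | ⟨x₀, hx₀⟩ := Finset.eq_empty_or_nonempty {x ∈ A | f x = y}
  · simp [hempty]
  · refine Finset.card_le_card_of_injOn (· - x₀) (fun x hx ↦ ?_) sub_left_injective.injOn
    simp_all

theorem exists_mem_map_mem_of_card_lt [AddGroup G] [Fintype G] [AddGroup H] [Fintype H]
    [DecidableEq H] (f : G →+ H) {A : Finset G} {B : Finset H}
    (hcard : #{x | f x = 0} * #Bᶜ < #A) :
    ∃ a ∈ A, f a ∈ B := by
  by_contra! hmaps
  refine hcard.not_ge <| Finset.card_le_mul_card_image_of_maps_to (f := f) (fun a ha ↦ ?_) _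
    fun y _ ↦ card_filter_map_eq_le_card_ker f A y
  exact Finset.mem_compl.2 (hmaps a ha)

theorem exists_forall_add_mem_of_card_lt [AddGroup G] [Fintype G] [DecidableEq G] {A S : Finset G}
    (hcard : #S * #Aᶜ < Fintype.card G) : ∃ c, ∀ s ∈ S, c + s ∈ A := by
  by_contra! hcover
  have huniv : S.biUnion (fun s ↦ Aᶜ.image (· - s)) = Finset.univ := by
    refine Finset.eq_univ_of_forall fun c ↦ ?_
    obtain ⟨s, hs, hcs⟩ := hcover c
    exact Finset.mem_biUnion.2
      ⟨s, hs, Finset.mem_image.2 ⟨c + s, Finset.mem_compl.2 hcs, add_sub_cancel_right c s⟩⟩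
  refine hcard.not_ge ?_
  rw [← Finset.card_univ, ← huniv]
  exact Finset.card_biUnion_le_card_mul _ _ _ fun s _ ↦ Finset.card_image_le

theorem sum_vec_three_mem [AddCommMonoid G] {A : Set G} {a b c : G}
    (ha : a ∈ A) (hb : b ∈ A) (hc : c ∈ A) (hab : a + b ∈ A) (hac : a + c ∈ A) (hbc : b + c ∈ A)
    (habc : a + b + c ∈ A) {I : Finset (Fin 3)} (hI : I.Nonempty) :
    ∑ i ∈ I, ![a, b, c] i ∈ A := by
  have hsum : ∑ i ∈ I, ![a, b, c] i =
      (if 0 ∈ I then a else 0) + (if 1 ∈ I then b else 0) + (if 2 ∈ I then c else 0) := by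
    rw [← Finset.univ_inter I, ← Finset.sum_ite_mem, Fin.sum_univ_three]
    simp
  have hmem : 0 ∈ I ∨ 1 ∈ I ∨ 2 ∈ I := by
    simpa [Finset.Nonempty, Fin.exists_fin_succ] using hI
  rw [hsum]
  split_ifs <;> simp_all

theorem stmt_0_general [AddCommGroup G] [Fintype G] [DecidableEq G]
    (htors : #{x : G | 2 • x = 0} ≤ 2) {A : Finset G}
    (hA : ¬ ∃ a : Fin 3 → G, ∀ I : Finset (Fin 3), I.Nonempty → ∑ i ∈ I, a i ∈ A) :
    3 * #A ≤ 2 * Fintype.card G := by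
  by_contra! hlarge
  have hcompl : #A + #Aᶜ = Fintype.card G := A.card_add_card_compl
  obtain ⟨a, ha, haa⟩ : ∃ a ∈ A, 2 • a ∈ A := by
    refine exists_mem_map_mem_of_card_lt (nsmulAddMonoidHom (α := G) 2) ?_
    calc #{x : G | 2 • x = 0} * #Aᶜ ≤ 2 * #Aᶜ := by gcongr
      _ < #A := by lia
  obtain ⟨c, hc⟩ : ∃ c, ∀ s ∈ ({0, a, 2 • a} : Finset G), c + s ∈ A := by
    refine exists_forall_add_mem_of_card_lt ?_
    calc #{0, a, 2 • a} * #Aᶜ ≤ 3 * #Aᶜ := by gcongr; exact Finset.card_le_three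
      _ < Fintype.card G := by lia
  obtain ⟨hc₀, hc₁, hc₂⟩ : c ∈ A ∧ a + c ∈ A ∧ a + a + c ∈ A := by
    simpa [two_nsmul, add_comm c] using hc
  rw [two_nsmul] at haa
  exact hA ⟨![a, a, c], fun _ hI ↦
    Finset.mem_coe.1 (sum_vec_three_mem ha ha hc₀ haa hc₁ hc₁ hc₂ hI)⟩

end

theorem stmt_0 (N : ℕ) (hN : 0 < N) (h3 : 3 ∣ N) (A : Finset (ZMod N))
    (hA : IsCubeFree N 3 A) :
    3 * A.card ≤ 2 * N := by
  have : NeZero N := ⟨hN.ne'⟩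
  simpa using stmt_0_general (IsAddCyclic.card_nsmul_eq_zero_le two_pos) hA
end

section
/- Let N be any positive integer and let A be a 3-cube-free subset of Z_N. Then 3·|A| ≤ 2·N (i.e., |A| ≤ 2N/3; no divisibility assumption on N is needed). -/
/-!
Let `G` be a finite abelian group in which `2x = 0` has at most two solutions, as in `ZMod N`, and
let `B` be the complement of a set `A ⊆ G` with `3 * |B| < |G|`. Look for a cube generated by a
multiset `a, a, c`: its elements are `a`, `2a`, `c`, `c + a`, `c + 2a`. Doubling is at most
two-to-one, so at most `|B| + 2 * |B|` choices of `a` violate `a, 2a ∈ A`. For a good `a`, at most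
`3 * |B|` choices of `c` violate `c, c + a, c + 2a ∈ A`. Both exceptional sets are smaller than `G`.
-/

open Finset
open scoped Pointwise

/-- The finite set `A` contains a projective `d`-cube of the additive commutative monoid `M`.
The generating multiset is encoded as `a : Fin d → M`, as in `IsCubeFree`, so that `IsCubeFree N d`
is by definition the negation of `ContainsCube d` over `ZMod N`. -/
def ContainsCube {M : Type*} [AddCommMonoid M] (d : ℕ) (A : Finset M) : Prop :=
  ∃ a : Fin d → M, ∀ I : Finset (Fin d), I.Nonempty → ∑ i ∈ I, a i ∈ A

theorem containsCube_three_of_mem {M : Type*} [AddCommMonoid M] {A : Finset M} {a b c : M}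
    (ha : a ∈ A) (hb : b ∈ A) (hc : c ∈ A) (hab : a + b ∈ A) (hac : a + c ∈ A) (hbc : b + c ∈ A)
    (habc : a + b + c ∈ A) : ContainsCube 3 A := by
  have nonempty_cases : ∀ I : Finset (Fin 3), I.Nonempty →
      I = {0} ∨ I = {1} ∨ I = {2} ∨ I = {0, 1} ∨ I = {0, 2} ∨ I = {1, 2} ∨ I = {0, 1, 2} := by
    decide
  refine ⟨![a, b, c], fun I hI ↦ ?_⟩
  rcases nonempty_cases I hI with rfl | rfl | rfl | rfl | rfl | rfl | rfl <;>
    simpa [← add_assoc]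

section AddGroup

variable {G : Type*} [AddGroup G] [Fintype G]

theorem card_filter_map_mem_le {H : Type*} [AddGroup H] [DecidableEq H] (f : G →+ H)
    (S : Finset H) : #{x | f x ∈ S} ≤ #{x | f x = 0} * #S := by
  refine card_le_mul_card_image_of_maps_to (f := f) (fun x hx ↦ (mem_filter.1 hx).2) _
    fun y _ ↦ ?_
  obtain hempty | ⟨x₀, hx₀⟩ := ({x ∈ ({x | f x ∈ S} : Finset G) | f x = y}).eq_empty_or_nonempty
  · simp [hempty]
  · have hfx₀ : f x₀ = y := (mem_filter.1 hx₀).2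
    refine card_le_card_of_injOn (· - x₀) (fun x hx ↦ ?_) sub_left_injective.injOn
    have hfx : f x = y := (mem_filter.1 hx).2
    simp [hfx, hfx₀]

variable [DecidableEq G]

theorem exists_mem_map_mem_of_card_compl_lt {A : Finset G} (f : G →+ G)
    (h : (1 + #{x | f x = 0}) * #Aᶜ < Fintype.card G) : ∃ a ∈ A, f a ∈ A := by
  have hbad : #(Aᶜ ∪ ({x | f x ∈ Aᶜ} : Finset G)) < #(univ : Finset G) := calc
    #(Aᶜ ∪ ({x | f x ∈ Aᶜ} : Finset G)) ≤ #Aᶜ + #{x | f x ∈ Aᶜ} := card_union_le _ _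
    _ ≤ #Aᶜ + #{x | f x = 0} * #Aᶜ := by gcongr; exact card_filter_map_mem_le f _
    _ < #(univ : Finset G) := by rwa [card_univ, ← one_add_mul]
  obtain ⟨a, -, ha⟩ := exists_mem_notMem_of_card_lt_card hbad
  exact ⟨a, by simpa [not_or] using ha⟩

theorem exists_forall_add_mem_of_card_mul_card_compl_lt {A T : Finset G}
    (h : #T * #Aᶜ < Fintype.card G) : ∃ c, ∀ t ∈ T, c + t ∈ A := by
  have hbad : #(Aᶜ - T) < #(univ : Finset G) := by
    grw [card_sub_le, mul_comm, h, card_univ]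
  obtain ⟨c, -, hc⟩ := exists_mem_notMem_of_card_lt_card hbad
  refine ⟨c, fun t ht ↦ by_contra fun hct ↦ hc ?_⟩
  simpa using sub_mem_sub (mem_compl.2 hct) ht

end AddGroup

theorem stmt_1_general {G : Type*} [AddCommGroup G] [Fintype G] [DecidableEq G]
    (hG : #{x : G | 2 • x = 0} ≤ 2) (A : Finset G) (hA : ¬ ContainsCube 3 A) :
    3 * #A ≤ 2 * Fintype.card G := by
  by_contra! hlarge
  have hcompl : 3 * #Aᶜ < Fintype.card G := by
    have := card_add_card_compl A
    lia
  obtain ⟨a, ha, haa⟩ : ∃ a ∈ A, 2 • a ∈ A := by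
    refine exists_mem_map_mem_of_card_compl_lt (nsmulAddMonoidHom 2) (lt_of_le_of_lt ?_ hcompl)
    exact Nat.mul_le_mul_right _ (Nat.add_le_add_left hG 1)
  obtain ⟨c, hc⟩ : ∃ c, ∀ t ∈ ({0, a, a + a} : Finset G), c + t ∈ A :=
    exists_forall_add_mem_of_card_mul_card_compl_lt <|
      (Nat.mul_le_mul_right _ card_le_three).trans_lt hcompl
  have hc₀ : c ∈ A := by simpa using hc 0 (by simp)
  have hac : a + c ∈ A := by simpa [add_comm] using hc a (by simp)
  have haac : a + a + c ∈ A := by simpa [add_comm] using hc (a + a) (by simp)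
  exact hA (containsCube_three_of_mem ha ha hc₀ (two_nsmul a ▸ haa) hac hac haac)

theorem stmt_1 (N : ℕ) (hN : 0 < N) (A : Finset (ZMod N))
    (hA : IsCubeFree N 3 A) :
    3 * A.card ≤ 2 * N := by
  have : NeZero N := ⟨hN.ne'⟩
  simpa only [ZMod.card] using
    stmt_1_general (IsAddCyclic.card_nsmul_eq_zero_le two_pos) A hA
end

section
/- Let N > 1 be an integer and let d be the smallest prime factor of N (i.e., d is prime, d divides N, and every prime p dividing N satisfies d ≤ p). If A is a d-cube-free subset of Z_N, then d·|A| ≤ (d−1)·N (i.e., |A| ≤ (d−1)N/d). -/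
/-!
Let `G` be a finite abelian group such that every prime factor of `|G|` is at least `d`, and let `B`
be the complement of `A`. If `d * |B| < |G|`, a union bound gives an `a` with
`a, 2a, …, (d - 1)a ∉ B`, because multiplication by each `0 < j < d` is injective on `G`. A second
union bound, now over translations, gives a `b` with `b, b + a, …, b + (d - 1)a ∉ B`. Every element
of the projective cube generated by `b` and `d - 1` copies of `a` is on one of these two lists, so
`A` is not `d`-cube-free.
-/

theorem exists_forall_notMem_of_card_mul_card_lt {ι α β : Type*} [Fintype α] (s : Finset ι)
    (B : Finset β) {f : ι → α → β} (hf : ∀ j ∈ s, (f j).Injective)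
    (h : s.card * B.card < Fintype.card α) : ∃ x, ∀ j ∈ s, f j x ∉ B := by
  classical
  let bad (j : ι) : Finset α := {x | f j x ∈ B}
  have card_bad_le (j : ι) (hj : j ∈ s) : (bad j).card ≤ B.card :=
    Finset.card_le_card_of_injOn (f j) (fun x hx ↦ by simpa [bad] using hx) (hf j hj).injOn
  have card_biUnion_lt : (s.biUnion bad).card < (Finset.univ : Finset α).card :=
    (Finset.card_biUnion_le_card_mul s bad B.card card_bad_le).trans_lt h
  obtain ⟨x, -, hx⟩ := Finset.exists_mem_notMem_of_card_lt_card card_biUnion_lt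
  exact ⟨x, by simpa [bad] using hx⟩

theorem coprime_of_lt_of_forall_prime_le {n d j : ℕ} (hmin : ∀ p : ℕ, p.Prime → p ∣ n → d ≤ p)
    (hj : 0 < j) (hjd : j < d) : n.Coprime j :=
  Nat.coprime_of_dvd fun p hp hpn hpj ↦
    ((Nat.le_of_dvd hj hpj).trans_lt hjd).not_ge (hmin p hp hpn)

theorem exists_forall_nsmul_notMem {G : Type*} [AddGroup G] [Fintype G] {d : ℕ}
    (hmin : ∀ p : ℕ, p.Prime → p ∣ Fintype.card G → d ≤ p) {B : Finset G}
    (hB : d * B.card < Fintype.card G) : ∃ a : G, ∀ j, 0 < j → j < d → j • a ∉ B := by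
  have nsmul_injective (j : ℕ) (hj : j ∈ Finset.Ioo 0 d) : (fun x : G ↦ j • x).Injective := by
    rw [Finset.mem_Ioo] at hj
    rw [← Nat.card_eq_fintype_card] at hmin
    exact (nsmulCoprime (coprime_of_lt_of_forall_prime_le hmin hj.1 hj.2)).injective
  have card_Ioo_le : (Finset.Ioo 0 d).card ≤ d := by
    rw [Nat.card_Ioo]
    omega
  obtain ⟨a, ha⟩ := exists_forall_notMem_of_card_mul_card_lt _ B nsmul_injective
    ((Nat.mul_le_mul_right _ card_Ioo_le).trans_lt hB)
  exact ⟨a, fun j hj hjd ↦ ha j (Finset.mem_Ioo.2 ⟨hj, hjd⟩)⟩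

theorem exists_forall_add_nsmul_notMem {G : Type*} [AddGroup G] [Fintype G] {d : ℕ}
    {B : Finset G} (hB : d * B.card < Fintype.card G) (a : G) :
    ∃ b : G, ∀ j < d, b + j • a ∉ B := by
  obtain ⟨b, hb⟩ := exists_forall_notMem_of_card_mul_card_lt (Finset.range d) B
    (fun j _ ↦ add_left_injective (j • a)) (by rwa [Finset.card_range])
  exact ⟨b, fun j hj ↦ hb j (Finset.mem_range.2 hj)⟩

theorem sum_update_const_mem {ι M : Type*} [Fintype ι] [DecidableEq ι] [AddCommMonoid M]
    {A : Set M} {a b : M} (ha : ∀ j, 0 < j → j < Fintype.card ι → j • a ∈ A)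
    (hb : ∀ j < Fintype.card ι, b + j • a ∈ A) (i₀ : ι) {I : Finset ι} (hI : I.Nonempty) :
    ∑ i ∈ I, Function.update (fun _ ↦ a) i₀ b i ∈ A := by
  by_cases hi₀ : i₀ ∈ I
  · rw [Finset.sum_update_of_mem hi₀, Finset.sum_const]
    exact hb _ (Finset.card_lt_univ_of_notMem (x := i₀) (by simp))
  · rw [Finset.sum_update_of_notMem hi₀, Finset.sum_const]
    exact ha _ hI.card_pos (Finset.card_lt_univ_of_notMem hi₀)

theorem exists_cube_subset_of_mul_card_compl_lt {G : Type*} [AddCommGroup G] [Fintype G]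
    [DecidableEq G] {d : ℕ} (hmin : ∀ p : ℕ, p.Prime → p ∣ Fintype.card G → d ≤ p)
    {A : Finset G} (hA : d * Aᶜ.card < Fintype.card G) :
    ∃ a : Fin d → G, ∀ I : Finset (Fin d), I.Nonempty → ∑ i ∈ I, a i ∈ A := by
  obtain ⟨a, ha⟩ := exists_forall_nsmul_notMem hmin hA
  obtain ⟨b, hb⟩ := exists_forall_add_nsmul_notMem hA a
  simp only [Finset.mem_compl, not_not] at ha hb
  rcases d.eq_zero_or_pos with rfl | hd
  · exact ⟨Fin.elim0, fun I ⟨i, _⟩ ↦ i.elim0⟩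
  · exact ⟨Function.update (fun _ ↦ a) ⟨0, hd⟩ b, fun I hI ↦
      sum_update_const_mem (A := (A : Set G)) (by simpa using ha) (by simpa using hb) _ hI⟩

theorem stmt_2_general {G : Type*} [AddCommGroup G] [Fintype G] (d : ℕ)
    (hmin : ∀ p : ℕ, p.Prime → p ∣ Fintype.card G → d ≤ p) (A : Finset G)
    (hA : ¬ ∃ a : Fin d → G, ∀ I : Finset (Fin d), I.Nonempty → ∑ i ∈ I, a i ∈ A) :
    d * A.card ≤ (d - 1) * Fintype.card G := by
  classical
  have card_le : Fintype.card G ≤ d * Aᶜ.card :=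
    not_lt.1 fun hlt ↦ hA (exists_cube_subset_of_mul_card_compl_lt hmin hlt)
  have card_add : d * A.card + d * Aᶜ.card = d * Fintype.card G := by
    rw [← mul_add, Finset.card_add_card_compl]
  rw [Nat.sub_one_mul]
  omega

theorem stmt_2 (N d : ℕ) (hN : 1 < N) (hd : d.Prime) (hdN : d ∣ N)
    (hmin : ∀ p : ℕ, p.Prime → p ∣ N → d ≤ p) (A : Finset (ZMod N))
    (hA : IsCubeFree N d A) :
    d * A.card ≤ (d - 1) * N := by
  have : NeZero N := ⟨by omega⟩
  simpa only [ZMod.card] using stmt_2_general d (by simpa only [ZMod.card] using hmin) A hA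
end

section
/- Let d ≥ 2 and N ≥ 1 be integers with d dividing N, and let B = {b ∈ Z_N : b ≡ 1, 2, …, or d−1 (mod d)}, i.e., the set of b ∈ Z_N whose image under the natural ring homomorphism Z_N → Z_d is nonzero. Then B is d-cube-free and d·|B| = (d−1)·N, so the bound (d−1)N/d for d-cube-free subsets of Z_N is tight. -/
/-!
Order the index set. If the partial sums `∑ j ≤ i, a j` of at least `|G|` elements of a finite
abelian group `G` are distinct, they exhaust `G` and one of them is zero; if two of them coincide,
their difference is a zero sum over an interval. Either way `a` has a nonempty zero subsum. Applied
to the images in `ZMod d` of the generators of a projective `d`-cube, this puts a multiple of `d` in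
every such cube.
-/

open Finset

section ZeroSum

variable {ι G : Type*} [AddCommGroup G]

theorem sum_Ioc_eq_zero_of_sum_Iic_eq [LinearOrder ι] [LocallyFiniteOrder ι]
    [LocallyFiniteOrderBot ι] {a : ι → G} {i j : ι} (hij : i ≤ j)
    (h : ∑ k ∈ Iic i, a k = ∑ k ∈ Iic j, a k) : ∑ k ∈ Ioc i j, a k = 0 := by
  have hsplit := sum_sdiff (f := a) (Ioc_subset_Iic_self : Ioc i j ⊆ Iic j)
  rwa [Iic_sdiff_Ioc_self_of_le hij, h, add_eq_left] at hsplit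

theorem exists_sum_Iic_eq_zero_or_exists_sum_Ioc_eq_zero [LinearOrder ι] [LocallyFiniteOrder ι]
    [LocallyFiniteOrderBot ι] [Finite G] (hcard : Nat.card G ≤ Nat.card ι) (a : ι → G) :
    (∃ i, ∑ k ∈ Iic i, a k = 0) ∨ ∃ i j, i < j ∧ ∑ k ∈ Ioc i j, a k = 0 := by
  by_cases hinj : Function.Injective fun i ↦ ∑ k ∈ Iic i, a k
  · exact .inl ((hinj.bijective_of_nat_card_le hcard).surjective 0)
  · obtain ⟨i, j, hsum, hne⟩ := Function.not_injective_iff.mp hinj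
    rcases hne.lt_or_gt with hij | hji
    · exact .inr ⟨i, j, hij, sum_Ioc_eq_zero_of_sum_Iic_eq hij.le hsum⟩
    · exact .inr ⟨j, i, hji, sum_Ioc_eq_zero_of_sum_Iic_eq hji.le hsum.symm⟩

theorem exists_nonempty_sum_eq_zero [Finite ι] [Finite G]
    (hcard : Nat.card G ≤ Nat.card ι) (a : ι → G) :
    ∃ I : Finset ι, I.Nonempty ∧ ∑ i ∈ I, a i = 0 := by
  let e := (Finite.equivFin ι).symm
  suffices ∃ I : Finset (Fin (Nat.card ι)), I.Nonempty ∧ ∑ k ∈ I, a (e k) = 0 by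
    obtain ⟨I, hI, hsum⟩ := this
    exact ⟨I.map e.toEmbedding, hI.map, by simpa using hsum⟩
  rcases exists_sum_Iic_eq_zero_or_exists_sum_Ioc_eq_zero (by simpa using hcard) (a ∘ e) with
    ⟨i, hsum⟩ | ⟨i, j, hij, hsum⟩
  · exact ⟨Iic i, nonempty_Iic, hsum⟩
  · exact ⟨Ioc i j, nonempty_Ioc.mpr hij, hsum⟩

theorem isCubeFree_of_forall_map_ne_zero {N d : ℕ} [Finite G] (hG : Nat.card G ≤ d)
    (φ : ZMod N →+ G) {A : Finset (ZMod N)} (hA : ∀ b ∈ A, φ b ≠ 0) : IsCubeFree N d A := by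
  rintro ⟨a, ha⟩
  obtain ⟨I, hI, hsum⟩ := exists_nonempty_sum_eq_zero (by simpa using hG) (φ ∘ a)
  exact hA _ (ha I hI) ((map_sum φ a I).trans hsum)

end ZeroSum

section Counting

variable {G H : Type*} [AddGroup G] [Fintype G] [AddGroup H] [DecidableEq H] {φ : G →+ H}

theorem card_mul_card_filter_map_eq_zero (hφ : Function.Surjective φ) :
    Nat.card H * #{g | φ g = 0} = Nat.card G := by
  have hker : Nat.card φ.ker = #{g | φ g = 0} :=
    Nat.subtype_card _ (by simp [AddMonoidHom.mem_ker])
  rw [← hker, ← φ.ker.index_mul_card, AddSubgroup.index_ker, AddMonoidHom.range_eq_top.mpr hφ,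
    AddSubgroup.card_top]

theorem card_mul_card_filter_map_ne_zero (hφ : Function.Surjective φ) :
    Nat.card H * #{g | φ g ≠ 0} = (Nat.card H - 1) * Nat.card G := by
  have hcompl : #{g | φ g = 0} + #{g | φ g ≠ 0} = Nat.card G := by
    rw [card_filter_add_card_filter_not, card_univ, Nat.card_eq_fintype_card]
  calc Nat.card H * #{g | φ g ≠ 0}
      = Nat.card H * Nat.card G - Nat.card H * #{g | φ g = 0} := by
        rw [← Nat.mul_sub, ← hcompl, Nat.add_sub_cancel_left]
    _ = (Nat.card H - 1) * Nat.card G := by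
        rw [card_mul_card_filter_map_eq_zero hφ, Nat.sub_one_mul]

end Counting

theorem stmt_4 (N d : ℕ) [NeZero N] (hd : 2 ≤ d) (hdN : d ∣ N) :
    IsCubeFree N d (Finset.univ.filter
        (fun b : ZMod N => ZMod.castHom hdN (ZMod d) b ≠ 0)) ∧
      d * (Finset.univ.filter
        (fun b : ZMod N => ZMod.castHom hdN (ZMod d) b ≠ 0)).card = (d - 1) * N := by
  have : NeZero d := ⟨by lia⟩
  let φ : ZMod N →+ ZMod d := ZMod.castHom hdN (ZMod d)
  have hφ : Function.Surjective φ := ZMod.castHom_surjective hdN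
  constructor
  · exact isCubeFree_of_forall_map_ne_zero (Nat.card_zmod d).le φ fun b hb ↦ (mem_filter.mp hb).2
  · simpa only [Nat.card_zmod] using! card_mul_card_filter_map_ne_zero hφ
end

section
/- Let d ≥ 1 and t be integers with 1 ≤ t ≤ d, and let a₁, …, a_t be elements of Z_d, all nonzero. Define S_t = { ∑_{i ∈ I} a_i : I a nonempty subset of {1, …, t} } (the set of all sums ∑ λ_i a_i with λ_i ∈ {0,1} not all zero). If 0 ∉ S_t, then |S_t| ≥ t. -/
/-- The set of all subset-sums `∑_{i ∈ I} a i` over nonempty subsets `I ⊆ Fin t`. -/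
def subsetSums {d t : ℕ} (a : Fin t → ZMod d) : Finset (ZMod d) :=
  (Finset.univ.filter (fun I : Finset (Fin t) => I.Nonempty)).image
    (fun I => ∑ i ∈ I, a i)

/-! If `I` is a proper subset of `J` with the same sum, then `J \ I` is nonempty with sum zero.
So when no nonempty subset sums to zero, adjoining an index to `s` produces a new subset sum,
namely the sum over all of the enlarged set. -/

section

variable {ι G : Type*} [DecidableEq G]

/-- The set of sums of the family `a` over the nonempty subsets of a finite index set `s`. This is
`subsetSums` for families in any commutative monoid, with `s` made explicit so that it can grow in
an induction. -/
def nonemptySubsetSums [AddCommMonoid G] (s : Finset ι) (a : ι → G) : Finset G :=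
  {I ∈ s.powerset | I.Nonempty}.image fun I => ∑ i ∈ I, a i

theorem mem_nonemptySubsetSums [AddCommMonoid G] {s : Finset ι} {a : ι → G} {x : G} :
    x ∈ nonemptySubsetSums s a ↔ ∃ I ⊆ s, I.Nonempty ∧ ∑ i ∈ I, a i = x := by
  simp [nonemptySubsetSums, and_assoc]

theorem nonemptySubsetSums_mono [AddCommMonoid G] {s t : Finset ι} (hst : s ⊆ t) (a : ι → G) :
    nonemptySubsetSums s a ⊆ nonemptySubsetSums t a :=
  Finset.image_subset_image (Finset.filter_subset_filter _ (Finset.powerset_mono.mpr hst))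

theorem sum_mem_nonemptySubsetSums [AddCommMonoid G] {s : Finset ι} (hs : s.Nonempty)
    (a : ι → G) : ∑ i ∈ s, a i ∈ nonemptySubsetSums s a :=
  mem_nonemptySubsetSums.mpr ⟨s, subset_rfl, hs, rfl⟩

variable [AddCancelCommMonoid G] {s : Finset ι} {a : ι → G}

theorem sum_ne_sum_of_ssubset (h0 : 0 ∉ nonemptySubsetSums s a) {I : Finset ι} (hI : I ⊂ s) :
    ∑ i ∈ I, a i ≠ ∑ i ∈ s, a i := by
  classical
  intro hsum
  have hsdiff : ∑ i ∈ s \ I, a i = 0 := by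
    rw [← add_eq_right, Finset.sum_sdiff hI.subset, hsum]
  exact h0 (mem_nonemptySubsetSums.mpr
    ⟨s \ I, Finset.sdiff_subset, Finset.sdiff_nonempty.mpr hI.not_subset, hsdiff⟩)

theorem sum_notMem_nonemptySubsetSums_of_ssubset (h0 : 0 ∉ nonemptySubsetSums s a)
    {t : Finset ι} (hts : t ⊂ s) : ∑ i ∈ s, a i ∉ nonemptySubsetSums t a := by
  intro hmem
  obtain ⟨I, hIt, -, hsum⟩ := mem_nonemptySubsetSums.mp hmem
  exact sum_ne_sum_of_ssubset h0 (hIt.trans_ssubset hts) hsum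

theorem card_nonemptySubsetSums_lt_of_ssubset (h0 : 0 ∉ nonemptySubsetSums s a)
    {t : Finset ι} (hts : t ⊂ s) :
    (nonemptySubsetSums t a).card < (nonemptySubsetSums s a).card := by
  have hs : s.Nonempty := Finset.empty_ssubset.mp ((Finset.empty_subset t).trans_ssubset hts)
  refine Finset.card_lt_card ((Finset.ssubset_iff_of_subset
    (nonemptySubsetSums_mono hts.subset a)).mpr ⟨∑ i ∈ s, a i, ?_, ?_⟩)
  · exact sum_mem_nonemptySubsetSums hs a
  · exact sum_notMem_nonemptySubsetSums_of_ssubset h0 hts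

theorem stmt_5_general (h0 : 0 ∉ nonemptySubsetSums s a) :
    s.card ≤ (nonemptySubsetSums s a).card := by
  classical
  induction s using Finset.induction_on with
  | empty => simp
  | insert i s hi ih =>
    have hss : s ⊂ insert i s := Finset.ssubset_insert hi
    have hs : 0 ∉ nonemptySubsetSums s a :=
      fun hmem => h0 (nonemptySubsetSums_mono hss.subset a hmem)
    calc (insert i s).card = s.card + 1 := Finset.card_insert_of_notMem hi
      _ ≤ (nonemptySubsetSums s a).card + 1 := Nat.succ_le_succ (ih hs)
      _ ≤ (nonemptySubsetSums (insert i s) a).card :=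
        card_nonemptySubsetSums_lt_of_ssubset h0 hss

end

theorem subsetSums_eq_nonemptySubsetSums_univ {d t : ℕ} (a : Fin t → ZMod d) :
    subsetSums a = nonemptySubsetSums Finset.univ a := by
  simp only [subsetSums, nonemptySubsetSums, Finset.powerset_univ]

theorem stmt_5 (d t : ℕ) (hd : 1 ≤ d) (ht : 1 ≤ t) (htd : t ≤ d)
    (a : Fin t → ZMod d) (ha : ∀ i, a i ≠ 0)
    (h0 : (0 : ZMod d) ∉ subsetSums a) :
    t ≤ (subsetSums a).card := by
  rw [subsetSums_eq_nonemptySubsetSums_univ] at h0 ⊢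
  simpa only [Finset.card_univ, Fintype.card_fin] using stmt_5_general h0
end

section
/- Let d ≥ 2 and N ≥ 1 be integers and let A be a d-cube-free subset of Z_N. If there exists x ∈ Z_N such that i·x ∈ A for every integer i with 1 ≤ i ≤ d−1 (i.e., A contains the diagonal set {x, 2x, …, (d−1)x}), then d·|A| ≤ (d−1)·N. -/
/-!
If `A` contains `x, 2x, …, (d - 1)x` but no projective `d`-cube, then no progression
`y, y + x, …, y + (d - 1)x` lies in `A`: otherwise the cube generated by one copy of `y` and `d - 1`
copies of `x` would be contained in `A`. Hence the `d` translates of the complement of `A` by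
`0, -x, …, -(d - 1)x` cover the whole group, so the complement has density at least `1 / d`.
-/

open Finset
open scoped Pointwise

section Cube

variable {ι M : Type*} [AddCommMonoid M]

/-- The projective cube generated by the family `a`: the set of all its nonempty finite subset sums.
An arbitrary index type replaces `Fin d`, so that the dimension of the cube is the cardinality
of `ι`. -/
def projectiveCube (a : ι → M) : Set M :=
  {s | ∃ I : Finset ι, I.Nonempty ∧ ∑ i ∈ I, a i = s}

variable [Fintype ι]

theorem projectiveCube_update_const_subset [DecidableEq ι] (j : ι) (x y : M) :
    projectiveCube (Function.update (fun _ ↦ x) j y) ⊆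
      (fun k : ℕ ↦ k • x) '' Set.Ico 1 (Fintype.card ι) ∪
        (fun k : ℕ ↦ y + k • x) '' Set.Iio (Fintype.card ι) := by
  rintro _ ⟨I, hI, rfl⟩
  by_cases hj : j ∈ I
  · refine Or.inr ⟨#(I \ {j}), card_lt_univ_of_notMem (x := j) (by simp), ?_⟩
    simp only [sum_update_of_mem hj, sum_const]
  · refine Or.inl ⟨#I, ⟨hI.card_pos, card_lt_univ_of_notMem hj⟩, ?_⟩
    simp only [sum_update_of_notMem hj, sum_const]

theorem exists_add_nsmul_notMem [Nonempty ι] {A : Set M}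
    (hA : ∀ a : ι → M, ¬ projectiveCube a ⊆ A) {x : M}
    (hx : ∀ k ∈ Set.Ico 1 (Fintype.card ι), k • x ∈ A) (y : M) :
    ∃ k < Fintype.card ι, y + k • x ∉ A := by
  classical
  by_contra! hy
  exact hA _ <| (projectiveCube_update_const_subset (Classical.arbitrary ι) x y).trans <|
    Set.union_subset (Set.image_subset_iff.2 hx) (Set.image_subset_iff.2 hy)

end Cube

theorem card_le_card_compl_mul_card_of_forall_exists_add_notMem {G : Type*} [AddGroup G]
    [Fintype G] [DecidableEq G] {A T : Finset G} (h : ∀ y, ∃ t ∈ T, y + t ∉ A) :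
    Fintype.card G ≤ #Aᶜ * #T := by
  have hcover : Aᶜ - T = univ := eq_univ_of_forall fun y ↦ by
    obtain ⟨t, ht, hyt⟩ := h y
    exact mem_sub.2 ⟨y + t, mem_compl.2 hyt, t, ht, add_sub_cancel_right y t⟩
  calc Fintype.card G = #(Aᶜ - T) := by rw [hcover, card_univ]
    _ ≤ #Aᶜ * #T := card_sub_le

theorem stmt_6_general {G : Type*} [AddCommGroup G] [Fintype G] {d : ℕ} {A : Finset G}
    (hA : ∀ a : Fin d → G, ¬ projectiveCube a ⊆ A)
    (hx : ∃ x : G, ∀ i : ℕ, 1 ≤ i → i ≤ d - 1 → i • x ∈ A) :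
    d * #A ≤ (d - 1) * Fintype.card G := by
  classical
  obtain ⟨x, hx⟩ := hx
  obtain _ | n := d
  · simp
  have hmiss (y : G) : ∃ t ∈ (range (n + 1)).image (· • x), y + t ∉ A := by
    simpa using exists_add_nsmul_notMem hA
      (fun k hk ↦ hx k hk.1 (by simpa [Nat.lt_succ_iff] using hk.2)) y
  have hcompl : Fintype.card G ≤ #Aᶜ * (n + 1) :=
    (card_le_card_compl_mul_card_of_forall_exists_add_notMem hmiss).trans <|
      Nat.mul_le_mul_left _ (card_image_le.trans_eq (card_range _))
  have hsum : #A + #Aᶜ = Fintype.card G := card_add_card_compl A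
  rw [Nat.add_sub_cancel, ← hsum]
  linarith

theorem IsCubeFree.not_projectiveCube_subset {N d : ℕ} {A : Finset (ZMod N)}
    (hA : IsCubeFree N d A) (a : Fin d → ZMod N) : ¬ projectiveCube a ⊆ A :=
  fun ha ↦ hA ⟨a, fun I hI ↦ ha ⟨I, hI, rfl⟩⟩

theorem stmt_6 (N d : ℕ) (hN : 1 ≤ N) (hd : 2 ≤ d) (A : Finset (ZMod N))
    (hA : IsCubeFree N d A)
    (hx : ∃ x : ZMod N, ∀ i : ℕ, 1 ≤ i → i ≤ d - 1 → i • x ∈ A) :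
    d * A.card ≤ (d - 1) * N := by
  have : NeZero N := ⟨Nat.one_le_iff_ne_zero.1 hN⟩
  simpa only [ZMod.card] using stmt_6_general hA.not_projectiveCube_subset hx
end

section
/- Let d ≥ 2 be an integer. There exists a constant C > 0 (depending only on d) such that for every integer N ≥ 2 and every subset A of {1, 2, …, N} that is {x, dx}-free (i.e., there is no positive integer x with both x ∈ A and d·x ∈ A), one has |A| ≤ d/(d+1)·N + C·log N. -/
/-!
Put `K = ⌊N / d⌋` and `M = ⌊N / d²⌋`. For `x ∈ (M, K]` at most one of `x` and `d * x` lies in `A`,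
and the pairs `{x, d * x}` are disjoint because `d * x > K` for every `x > M`. So `A` misses at
least `K - M` points of `(M, N]`, whence `|A| ≤ N - ⌊N / d⌋ + |A ∩ [1, M]|`. Iterating with `M` in
place of `N`, the main terms sum to `(N - N / d) (1 + d⁻² + d⁻⁴ + ⋯) = d / (d + 1) * N`, and each
of the `O(log N)` rounds loses at most `1` to rounding.
-/

open Finset

/-- `A` is `{x, dx}`-free: no positive `x` has both `x` and `d * x` in `A`. Only positive `x` count,
since `0` equals its own multiple. -/
def DilationFree (d : ℕ) (A : Finset ℕ) : Prop :=
  ∀ ⦃x : ℕ⦄, 0 < x → x ∈ A → d * x ∉ A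

namespace DilationFree

variable {d K M N : ℕ} {A B : Finset ℕ}

lemma mono (hB : DilationFree d B) (hAB : A ⊆ B) : DilationFree d A :=
  fun _ hx hxA hdxA => hB hx (hAB hxA) (hAB hdxA)

lemma card_Ioc_le_card_Ioc_sdiff (hA : DilationFree d A) (hKM : K < d * (M + 1))
    (hKN : d * K ≤ N) : #(Ioc M K) ≤ #(Ioc M N \ A) := by
  have hd : 0 < d := Nat.pos_of_mul_pos_right (Nat.zero_lt_of_lt hKM)
  have lt_mul {x : ℕ} (hx : M < x) : K < d * x := hKM.trans_le (Nat.mul_le_mul_left d hx)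
  apply card_le_card_of_injOn fun x => if x ∈ A then d * x else x
  · intro x hx
    obtain ⟨hMx, hxK⟩ := mem_Ioc.1 hx
    have hx_le : x ≤ d * x := Nat.le_mul_of_pos_left x hd
    have hdx_le : d * x ≤ N := (Nat.mul_le_mul_left d hxK).trans hKN
    dsimp only
    split_ifs with hxA
    · exact mem_sdiff.2 ⟨mem_Ioc.2 ⟨hMx.trans_le hx_le, hdx_le⟩, hA (Nat.zero_lt_of_lt hMx) hxA⟩
    · exact mem_sdiff.2 ⟨mem_Ioc.2 ⟨hMx, hx_le.trans hdx_le⟩, hxA⟩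
  · intro x hx y hy hxy
    obtain ⟨hMx, hxK⟩ := mem_Ioc.1 hx
    obtain ⟨hMy, hyK⟩ := mem_Ioc.1 hy
    have hKdx := lt_mul hMx
    have hKdy := lt_mul hMy
    dsimp only at hxy
    split_ifs at hxy
    · exact Nat.eq_of_mul_eq_mul_left hd hxy
    · omega
    · omega
    · exact hxy

lemma card_add_div_le (hd : 0 < d) (hA : DilationFree d A) (hAN : A ⊆ Icc 1 N) :
    #A + N / d ≤ N + #{x ∈ A | x ≤ N / d ^ 2} := by
  set M := N / d ^ 2 with hM
  have hM_eq : M = N / d / d := by rw [hM, sq, Nat.div_div_eq_div_mul]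
  have hMK : M ≤ N / d := hM_eq ▸ Nat.div_le_self _ _
  have hKN : N / d ≤ N := Nat.div_le_self _ _
  have missed : #(Ioc M (N / d)) ≤ #(Ioc M N \ A) :=
    hA.card_Ioc_le_card_Ioc_sdiff (hM_eq ▸ Nat.lt_mul_div_succ _ hd) (Nat.mul_div_le N d)
  have split_Ioc : #(Ioc M N \ A) + #(Ioc M N ∩ A) = #(Ioc M N) :=
    card_sdiff_add_card_inter _ _
  have split_A : #A ≤ #{x ∈ A | x ≤ M} + #(Ioc M N ∩ A) := by
    refine (card_le_card fun x hx => ?_).trans (card_union_le _ _)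
    have hxN := (mem_Icc.1 (hAN hx)).2
    rcases le_or_gt x M with hxM | hMx
    · exact mem_union_left _ (mem_filter.2 ⟨hx, hxM⟩)
    · exact mem_union_right _ (mem_inter.2 ⟨mem_Ioc.2 ⟨hMx, hxN⟩, hx⟩)
  simp only [Nat.card_Ioc] at missed split_Ioc
  omega

end DilationFree

lemma sub_div_add_mul_div_sq_le {d : ℕ} (hd : 0 < d) (N : ℕ) :
    (N : ℝ) - (N / d : ℕ) + d / (d + 1) * (N / d ^ 2 : ℕ) ≤ d / (d + 1) * N + 1 := by
  have floor_div : (N : ℝ) / d ≤ (N / d : ℕ) + 1 := by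
    rw [← Nat.floor_div_eq_div (K := ℝ)]
    exact (Nat.lt_floor_add_one _).le
  have floor_div_sq : ((N / d ^ 2 : ℕ) : ℝ) ≤ N / d ^ 2 := by
    exact_mod_cast Nat.cast_div_le (α := ℝ) (m := N) (n := d ^ 2)
  calc (N : ℝ) - (N / d : ℕ) + d / (d + 1) * (N / d ^ 2 : ℕ)
      ≤ N - (N / d - 1) + d / (d + 1) * (N / d ^ 2) := by
        gcongr
        linarith
    _ = d / (d + 1) * N + 1 := by
        field_simp
        ring

theorem DilationFree.card_le {d : ℕ} (hd : 1 < d) {N : ℕ} {A : Finset ℕ} (hA : DilationFree d A)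
    (hAN : A ⊆ Icc 1 N) : (#A : ℝ) ≤ d / (d + 1) * N + (Nat.log (d ^ 2) N + 1) := by
  induction N using Nat.strong_induction_on generalizing A with
  | _ N ih =>
  have hd2 : 1 < d ^ 2 := Nat.one_lt_pow two_ne_zero hd
  set A' := {x ∈ A | x ≤ N / d ^ 2}
  have hA'N : A' ⊆ Icc 1 (N / d ^ 2) := fun x hx =>
    have ⟨hxA, hxM⟩ := mem_filter.1 hx
    mem_Icc.2 ⟨(mem_Icc.1 (hAN hxA)).1, hxM⟩
  have recursion : (#A : ℝ) + (N / d : ℕ) ≤ N + #A' := by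
    exact_mod_cast hA.card_add_div_le (by omega) hAN
  have rounding := sub_div_add_mul_div_sq_le (by omega : 0 < d) N
  suffices (#A' : ℝ) ≤ d / (d + 1) * (N / d ^ 2 : ℕ) + Nat.log (d ^ 2) N by linarith
  rcases lt_or_ge N (d ^ 2) with hN | hN
  · have hA' : A' = ∅ := by simpa [Nat.div_eq_of_lt hN] using hA'N
    rw [hA', card_empty, Nat.cast_zero]
    positivity
  · have hN0 : 0 < N := by omega
    have log_eq : Nat.log (d ^ 2) N = Nat.log (d ^ 2) (N / d ^ 2) + 1 :=
      Nat.log_of_one_lt_of_le hd2 hN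
    rw [log_eq, Nat.cast_add_one]
    exact ih _ (Nat.div_lt_self hN0 hd2) (hA.mono (filter_subset _ _)) hA'N

lemma natLog_add_one_le_two_div_log_two_mul_log {b N : ℕ} (hb : 2 ≤ b) (hN : 2 ≤ N) :
    (Nat.log b N : ℝ) + 1 ≤ 2 / Real.log 2 * Real.log N := by
  have log_le : Nat.log b N ≤ Nat.log 2 N := Nat.log_anti_left one_lt_two hb
  have one_le : 1 ≤ Nat.log 2 N := Nat.log_pos one_lt_two hN
  calc (Nat.log b N : ℝ) + 1
      ≤ 2 * Nat.log 2 N := by exact_mod_cast (by omega : Nat.log b N + 1 ≤ 2 * Nat.log 2 N)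
    _ ≤ 2 * Real.logb 2 N := by
        gcongr
        exact_mod_cast Real.natLog_le_logb N 2
    _ = 2 / Real.log 2 * Real.log N := by
        rw [Real.logb]
        ring

theorem stmt_8 (d : ℕ) (hd : 2 ≤ d) :
    ∃ C : ℝ, 0 < C ∧ ∀ N : ℕ, 2 ≤ N → ∀ A ⊆ Finset.Icc 1 N,
      (¬ ∃ x : ℕ, 0 < x ∧ x ∈ A ∧ d * x ∈ A) →
      (A.card : ℝ) ≤ (d : ℝ) / (d + 1) * N + C * Real.log N := by
  refine ⟨2 / Real.log 2, by positivity, fun N hN A hAN hA => ?_⟩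
  have hfree : DilationFree d A := fun x hx hxA hdxA => hA ⟨x, hx, hxA, hdxA⟩
  have hd2 : 2 ≤ d ^ 2 := hd.trans (Nat.le_self_pow two_ne_zero d)
  calc (A.card : ℝ)
      ≤ d / (d + 1) * N + (Nat.log (d ^ 2) N + 1) := hfree.card_le hd hAN
    _ ≤ d / (d + 1) * N + 2 / Real.log 2 * Real.log N := by
        gcongr
        exact natLog_add_one_le_two_div_log_two_mul_log hd2 hN
end

section
/- Let d ≥ 1 and N ≥ 1 be integers, let A be a subset of Z_N that is {x, dx}-free (i.e., there is no x ∈ Z_N with both x ∈ A and d·x ∈ A), and let k = gcd(d, N). Then (k+1)·|A| ≤ k·N (i.e., |A| ≤ kN/(k+1)). -/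
/-!
If `A` contains no `x` together with `f x`, then `A` and `f(A)` are disjoint, so
`|A| + |f(A)| ≤ |G|`. For an endomorphism `f` of a group `G` each nonempty fibre is a coset of
`ker f`, so `|A| ≤ |ker f| * |f(A)|`. Eliminating `|f(A)|` gives the bound, and multiplication by
`d` on `ℤ/N` has a kernel of order `gcd(d, N)`.
-/

open Finset

theorem card_add_card_image_le_of_forall_notMem {α : Type*} [Fintype α] [DecidableEq α]
    {f : α → α} {A : Finset α} (hA : ∀ x ∈ A, f x ∉ A) :
    #A + #(A.image f) ≤ Fintype.card α := by
  have hdisj : Disjoint A (A.image f) := by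
    rw [disjoint_right, forall_mem_image]
    exact hA
  rw [← card_union_of_disjoint hdisj]
  exact card_le_univ _

theorem card_filter_apply_eq_le_card_ker {G H : Type*} [AddGroup G] [AddGroup H] [DecidableEq H]
    (f : G →+ H) [Finite f.ker] (A : Finset G) (a : G) :
    #{x ∈ A | f x = f a} ≤ Nat.card f.ker := by
  have : Finite (f ⁻¹' {f a}) := .of_equiv _ (f.fiberEquivKer a).symm
  calc #{x ∈ A | f x = f a}
      = (({x ∈ A | f x = f a} : Finset G) : Set G).ncard := (Set.ncard_coe_finset _).symm
    _ ≤ (f ⁻¹' {f a}).ncard := Set.ncard_le_ncard fun x hx ↦ (mem_filter.mp hx).2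
    _ = Nat.card f.ker := Nat.card_congr (f.fiberEquivKer a)

theorem card_le_card_ker_mul_card_image {G H : Type*} [AddGroup G] [AddGroup H] [DecidableEq H]
    (f : G →+ H) [Finite f.ker] (A : Finset G) :
    #A ≤ Nat.card f.ker * #(A.image f) :=
  card_le_mul_card_image A _ <| forall_mem_image.mpr fun a _ ↦
    card_filter_apply_eq_le_card_ker f A a

theorem stmt_9_general {G : Type*} [AddGroup G] [Fintype G] (f : G →+ G) (A : Finset G)
    (hA : ¬ ∃ x : G, x ∈ A ∧ f x ∈ A) :
    (Nat.card f.ker + 1) * #A ≤ Nat.card f.ker * Fintype.card G := by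
  classical
  have hfree : ∀ x ∈ A, f x ∉ A := fun x hx hfx ↦ hA ⟨x, hx, hfx⟩
  calc (Nat.card f.ker + 1) * #A
      = Nat.card f.ker * #A + #A := Nat.succ_mul _ _
    _ ≤ Nat.card f.ker * #A + Nat.card f.ker * #(A.image f) := by
        gcongr
        exact card_le_card_ker_mul_card_image f A
    _ = Nat.card f.ker * (#A + #(A.image f)) := (mul_add _ _ _).symm
    _ ≤ Nat.card f.ker * Fintype.card G := by
        gcongr
        exact card_add_card_image_le_of_forall_notMem hfree

theorem stmt_9 (N d : ℕ) (hN : 1 ≤ N) (hd : 1 ≤ d) (A : Finset (ZMod N))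
    (hA : ¬ ∃ x : ZMod N, x ∈ A ∧ d • x ∈ A) :
    (Nat.gcd d N + 1) * A.card ≤ Nat.gcd d N * N := by
  have : NeZero N := .of_pos hN
  simpa only [IsAddCyclic.card_nsmulAddMonoidHom_ker, Nat.card_zmod, ZMod.card, Nat.gcd_comm N d]
    using stmt_9_general (nsmulAddMonoidHom d) A hA
end

section
/- Let d ≥ 2 and N ≥ 1 be integers with d dividing N, and let A be a subset of Z_N that is {x, (d−1)x}-free (i.e., there is no x ∈ Z_N with both x ∈ A and (d−1)·x ∈ A). Then, with k = gcd(d−1, N), one has (k+1)·|A| ≤ k·N, and in particular d·|A| ≤ (d−1)·N. -/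
/-!
Multiplication by `n = d - 1` is an endomorphism of `ZMod N` whose kernel has `k = gcd n N`
elements, so each of its fibres has at most `k` elements. Freeness says that it maps `A` into the
complement of `A`; hence `#A ≤ k * (N - #A)`. The second bound follows in the same way from `k ≤ n`.
-/

open Finset

theorem add_one_mul_card_le_of_forall_notMem {α : Type*} [Fintype α] [DecidableEq α] {f : α → α}
    {A : Finset α} (hA : ∀ x ∈ A, f x ∉ A) {k : ℕ} (hk : ∀ b, #{a ∈ A | f a = b} ≤ k) :
    (k + 1) * #A ≤ k * Fintype.card α := by
  have card_le : #A ≤ k * #Aᶜ :=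
    card_le_mul_card_image_of_maps_to (fun x hx ↦ mem_compl.2 (hA x hx)) k fun b _ ↦ hk b
  calc (k + 1) * #A = k * #A + #A := Nat.succ_mul _ _
    _ ≤ k * #A + k * #Aᶜ := by gcongr
    _ = k * Fintype.card α := by rw [← mul_add, card_add_card_compl]

theorem card_filter_map_eq_le_card_ker_s10 {G H : Type*} [AddGroup G] [AddGroup H] [DecidableEq H]
    (f : G →+ H) [Finite f.ker] (s : Finset G) (b : H) :
    #{a ∈ s | f a = b} ≤ Nat.card f.ker := by
  obtain h_empty | ⟨a, ha⟩ := (s.filter (f · = b)).eq_empty_or_nonempty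
  · simp [h_empty]
  · obtain rfl : f a = b := (mem_filter.1 ha).2
    have : Finite (f ⁻¹' {f a}) := .of_equiv _ (f.fiberEquivKer a).symm
    calc #{x ∈ s | f x = f a} = Nat.card {x ∈ s | f x = f a} := (Nat.card_eq_finsetCard _).symm
      _ ≤ Nat.card (f ⁻¹' {f a}) :=
        Nat.card_mono (Set.toFinite _) fun x hx ↦ (mem_filter.1 hx).2
      _ = Nat.card f.ker := Nat.card_congr (f.fiberEquivKer a)

section Cyclic

variable {G : Type*} [AddCommGroup G] [IsAddCyclic G] [Fintype G]

theorem card_filter_nsmul_eq_le_gcd [DecidableEq G] (n : ℕ) (s : Finset G) (b : G) :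
    #{a ∈ s | n • a = b} ≤ n.gcd (Fintype.card G) :=
  calc #{a ∈ s | n • a = b} ≤ Nat.card (nsmulAddMonoidHom n : G →+ G).ker :=
        card_filter_map_eq_le_card_ker_s10 (nsmulAddMonoidHom n) s b
    _ = n.gcd (Fintype.card G) := by
      rw [IsAddCyclic.card_nsmulAddMonoidHom_ker, Nat.card_eq_fintype_card, Nat.gcd_comm]

theorem stmt_10_general {n : ℕ} (hn : n ≠ 0) {A : Finset G} (hA : ∀ x ∈ A, n • x ∉ A) :
    (n.gcd (Fintype.card G) + 1) * #A ≤ n.gcd (Fintype.card G) * Fintype.card G ∧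
      (n + 1) * #A ≤ n * Fintype.card G := by
  classical
  have card_fiber_le := card_filter_nsmul_eq_le_gcd n A
  have gcd_le : n.gcd (Fintype.card G) ≤ n := Nat.gcd_le_left _ (Nat.pos_of_ne_zero hn)
  exact ⟨add_one_mul_card_le_of_forall_notMem hA card_fiber_le,
    add_one_mul_card_le_of_forall_notMem hA fun b ↦ (card_fiber_le b).trans gcd_le⟩

end Cyclic

theorem stmt_10 (N d : ℕ) (hN : 1 ≤ N) (hd : 2 ≤ d) (hdN : d ∣ N)
    (A : Finset (ZMod N))
    (hA : ¬ ∃ x : ZMod N, x ∈ A ∧ (d - 1) • x ∈ A) :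
    (Nat.gcd (d - 1) N + 1) * A.card ≤ Nat.gcd (d - 1) N * N ∧
      d * A.card ≤ (d - 1) * N := by
  have : NeZero N := ⟨by omega⟩
  simpa only [ZMod.card, Nat.sub_add_cancel (show 1 ≤ d by omega)] using
    stmt_10_general (show d - 1 ≠ 0 by omega) fun x hx hx' ↦ hA ⟨x, hx, hx'⟩
end

section
/- Let N > 1 be an integer and let d be the smallest prime factor of N (i.e., d is prime, d divides N, and every prime p dividing N satisfies d ≤ p). If A is a subset of Z_N that is {x, 2x, …, (d−1)x}-free, then d·|A| ≤ (d−1)·N (i.e., |A| ≤ (d−1)N/d). -/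
/-!
If no `x` has all of `x, 2x, …, mx` in `A`, then the preimages of `Aᶜ` under the maps `x ↦ i • x`
for `1 ≤ i ≤ m` cover the group. When every prime factor of the order exceeds `m`, each of these
maps is injective, so `m` sets of size at most `|Aᶜ|` cover the group, i.e. `|G| ≤ m (|G| - |A|)`.
-/

open Finset

theorem card_le_card_mul_card_compl_of_injective {ι α β : Type*} [Fintype α] [Fintype β]
    [DecidableEq β] {s : Finset ι} {f : ι → α → β} (hf : ∀ i ∈ s, (f i).Injective) {A : Finset β}
    (hA : ¬ ∃ x, ∀ i ∈ s, f i x ∈ A) :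
    Fintype.card α ≤ #s * #Aᶜ := by
  classical
  have preimages_cover : s.biUnion (fun i ↦ {x | f i x ∈ Aᶜ}) = univ := by
    ext x
    simpa using not_exists.1 hA x
  calc
    Fintype.card α = #(s.biUnion fun i ↦ {x | f i x ∈ Aᶜ}) := by rw [preimages_cover, card_univ]
    _ ≤ #s * #Aᶜ := card_biUnion_le_card_mul _ _ _ fun i hi ↦
      card_le_card_of_injOn (f i) (fun x hx ↦ by simpa using hx) (hf i hi).injOn

theorem coprime_of_forall_prime_dvd_lt {n i : ℕ} (hi : i ≠ 0)
    (h : ∀ p : ℕ, p.Prime → p ∣ n → i < p) : n.Coprime i :=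
  Nat.coprime_of_dvd fun p hp hpn hpi ↦ (h p hp hpn).not_ge (Nat.le_of_dvd hi.bot_lt hpi)

theorem nsmul_injective_of_forall_prime_dvd_card_lt {G : Type*} [AddGroup G] {i : ℕ} (hi : i ≠ 0)
    (h : ∀ p : ℕ, p.Prime → p ∣ Nat.card G → i < p) : Function.Injective (i • · : G → G) :=
  (coprime_of_forall_prime_dvd_lt hi h).nsmul_right_bijective.injective

theorem stmt_11_general {G : Type*} [AddGroup G] [Fintype G] {m : ℕ}
    (hm : ∀ p : ℕ, p.Prime → p ∣ Fintype.card G → m < p) {A : Finset G}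
    (hA : ¬ ∃ x : G, ∀ i : ℕ, 1 ≤ i → i ≤ m → i • x ∈ A) :
    (m + 1) * #A ≤ m * Fintype.card G := by
  classical
  have nsmul_injective : ∀ i ∈ Icc 1 m, Function.Injective (i • · : G → G) := fun i hi ↦ by
    obtain ⟨one_le, le_m⟩ := mem_Icc.1 hi
    simp only [← Nat.card_eq_fintype_card] at hm
    exact nsmul_injective_of_forall_prime_dvd_card_lt (Nat.one_le_iff_ne_zero.1 one_le)
      fun p hp hpG ↦ le_m.trans_lt (hm p hp hpG)
  have card_le : Fintype.card G ≤ m * #Aᶜ := by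
    simpa using card_le_card_mul_card_compl_of_injective nsmul_injective (A := A)
      (by simpa only [mem_Icc, and_imp] using hA)
  calc
    (m + 1) * #A = m * #A + #A := by ring
    _ ≤ m * #A + m * #Aᶜ := by gcongr; exact A.card_le_univ.trans card_le
    _ = m * Fintype.card G := by rw [← mul_add, card_add_card_compl]

theorem stmt_11 (N d : ℕ) (hN : 1 < N) (hd : d.Prime) (hdN : d ∣ N)
    (hmin : ∀ p : ℕ, p.Prime → p ∣ N → d ≤ p) (A : Finset (ZMod N))
    (hA : ¬ ∃ x : ZMod N, ∀ i : ℕ, 1 ≤ i → i ≤ d - 1 → i • x ∈ A) :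
    d * A.card ≤ (d - 1) * N := by
  have : NeZero N := ⟨by lia⟩
  obtain ⟨m, rfl⟩ := Nat.exists_eq_add_one.2 hd.pos
  simpa [ZMod.card] using stmt_11_general (by simpa [ZMod.card, Nat.succ_le_iff] using hmin) hA
end

section
/- Let p be a prime and let d ≥ 1 and l ≥ 1 be integers. If A is a subset of Z_{p^l} that is {x, 2x, …, (p^d − 1)x}-free, then (p^d − 1)·|A| ≤ (p^d − 2)·p^l, i.e., |A| ≤ (1 − 1/(p^d − 1))·p^l. -/
/-!
Let `B` be the complement of `A`: it meets `{x, 2x, …, (p ^ d - 1)x}` for every `x`, and the claim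
is `p ^ l ≤ (p ^ d - 1) * #B`. Sort the elements of the cyclic group by their order and cut the
possible orders `1, p, p ^ 2, …` into blocks of `d` consecutive exponents. If `x` has order
`p ^ (e + d)` and `0 < i < p ^ d`, then `i • x` has order `p ^ j` with `e < j ≤ e + d`. Conversely,
each `y` of such an order is a multiple `i • x` for at most `φ (p ^ d)` pairs `(i, x)`, a bound
which does not depend on `j`. As there are `φ (p ^ (e + d)) = p ^ e * φ (p ^ d)` elements `x`,
double counting yields at least `p ^ e` elements of `B` in the block. Summing over the blocks gives
the claim, the last incomplete block being paid for by `0 ∈ B`.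
-/

open Finset
open scoped Nat

/-- The sets `B` that meet `{x, 2x, …, (q - 1)x}` for every `x`, that is, the complements of the
`{x, 2x, …, (q - 1)x}`-free sets. -/
def MeetsMultiplesBelow {G : Type*} [AddMonoid G] (q : ℕ) (B : Set G) : Prop :=
  ∀ x : G, ∃ i ∈ Ioo 0 q, i • x ∈ B

theorem MeetsMultiplesBelow.zero_mem {G : Type*} [AddMonoid G] {q : ℕ} {B : Set G}
    (hB : MeetsMultiplesBelow q B) : 0 ∈ B := by
  obtain ⟨i, -, hi⟩ := hB 0
  rwa [nsmul_zero] at hi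

theorem totient_prime_pow_add {p d : ℕ} (hp : p.Prime) (hd : 0 < d) (e : ℕ) :
    φ (p ^ (e + d)) = p ^ e * φ (p ^ d) := by
  rw [Nat.totient_prime_pow hp (by lia), Nat.totient_prime_pow hp hd, Nat.add_sub_assoc hd, pow_add,
    mul_assoc]

theorem card_filter_gcd_eq_mul_le_totient {p a d k : ℕ} (hp : p.Prime) (had : a < d)
    (hdk : d ≤ k) :
    #{i ∈ range (p ^ d) | (p ^ k).gcd i = p ^ a} * p ^ a ≤ φ (p ^ d) := by
  have gcd_truncate (i : ℕ) (hi : (p ^ k).gcd i = p ^ a) : (p ^ d).gcd i = p ^ a := by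
    rw [← Nat.gcd_eq_left (pow_dvd_pow p hdk), Nat.gcd_assoc, hi,
      Nat.gcd_eq_right (pow_dvd_pow p had.le)]
  calc #{i ∈ range (p ^ d) | (p ^ k).gcd i = p ^ a} * p ^ a
      ≤ #{i ∈ range (p ^ d) | (p ^ d).gcd i = p ^ a} * p ^ a :=
        Nat.mul_le_mul_right _ (card_le_card (monotone_filter_right _ fun i _ => gcd_truncate i))
    _ = p ^ a * φ (p ^ (d - a)) := by
        rw [← Nat.totient_div_of_dvd (pow_dvd_pow p had.le), Nat.pow_div had.le hp.pos, mul_comm]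
    _ = φ (p ^ d) := by
        rw [← totient_prime_pow_add hp (Nat.sub_pos_of_lt had), Nat.add_sub_cancel' had.le]

theorem addOrderOf_gcd_eq_div {G : Type*} [AddMonoid G] {x : G} (hx : 0 < addOrderOf x) (i : ℕ) :
    (addOrderOf x).gcd i = addOrderOf x / addOrderOf (i • x) := by
  rw [(addOrderOf_pos_iff.1 hx).addOrderOf_nsmul,
    Nat.div_div_self (Nat.gcd_dvd_left _ _) hx.ne']

theorem nsmul_nsmul_ne_zero_of_addOrderOf_eq_mul {G : Type*} [AddMonoid G] {x : G} {m q i : ℕ}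
    (hm : 0 < m) (hx : addOrderOf x = m * q) (hi : i ∈ Ioo 0 q) : m • i • x ≠ 0 := by
  obtain ⟨hi_pos, hi_lt⟩ := mem_Ioo.1 hi
  rw [← mul_nsmul', Ne, ← addOrderOf_dvd_iff_nsmul_eq_zero, hx, Nat.mul_dvd_mul_iff_left hm]
  exact Nat.not_dvd_of_pos_of_lt hi_pos hi_lt

theorem exists_div_addOrderOf_eq_pow {G : Type*} [AddMonoid G] {p d e : ℕ} (hp : p.Prime) {y : G}
    (hy : p ^ (e + d) • y = 0) (hy' : p ^ e • y ≠ 0) :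
    ∃ a < d, p ^ (e + d) / addOrderOf y = p ^ a := by
  obtain ⟨j, hj, hyj⟩ := (Nat.dvd_prime_pow hp).1 (addOrderOf_dvd_of_nsmul_eq_zero hy)
  have hej : e < j := by
    by_contra! hje
    exact hy' (addOrderOf_dvd_iff_nsmul_eq_zero.1 (hyj ▸ pow_dvd_pow p hje))
  exact ⟨e + d - j, by lia, by rw [hyj, Nat.pow_div hj hp.pos]⟩

section Cyclic

variable {G : Type*} [AddCommGroup G] [IsAddCyclic G] [Fintype G] [DecidableEq G]

theorem card_filter_nsmul_eq_le_gcd_s12 {n : ℕ} (hn : 0 < n) (i : ℕ) (y : G) :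
    #{x : G | n • x = 0 ∧ i • x = y} ≤ n.gcd i := by
  obtain hempty | ⟨x₀, hx₀⟩ := Finset.eq_empty_or_nonempty {x : G | n • x = 0 ∧ i • x = y}
  · simp [hempty]
  obtain ⟨hnx₀, hix₀⟩ := (mem_filter_univ _).1 hx₀
  calc #{x : G | n • x = 0 ∧ i • x = y}
      ≤ #{z : G | n.gcd i • z = 0} := by
        refine card_le_card_of_injOn (· - x₀) (fun x hx => ?_) sub_left_injective.injOn
        obtain ⟨hnx, hix⟩ := (mem_filter_univ _).1 hx
        exact (mem_filter_univ _).2 (gcd_nsmul_eq_zero.2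
          ⟨by rw [nsmul_sub, hnx, hnx₀, sub_zero], by rw [nsmul_sub, hix, hix₀, sub_self]⟩)
    _ ≤ n.gcd i := IsAddCyclic.card_nsmul_eq_zero_le (Nat.gcd_pos_of_pos_left _ hn)

theorem card_filter_mem_image_nsmul_le_totient {p d e : ℕ} (hp : p.Prime) {y : G}
    (hy : p ^ (e + d) • y = 0) (hy' : p ^ e • y ≠ 0) :
    #{x : G | addOrderOf x = p ^ (e + d) ∧ y ∈ (Ioo 0 (p ^ d)).image (· • x)} ≤ φ (p ^ d) := by
  obtain ⟨a, had, ha⟩ := exists_div_addOrderOf_eq_pow hp hy hy'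
  have hpos : 0 < p ^ (e + d) := pow_pos hp.pos _
  set I : Finset ℕ := {i ∈ range (p ^ d) | (p ^ (e + d)).gcd i = p ^ a}
  have hcover :
      ({x | addOrderOf x = p ^ (e + d) ∧ y ∈ (Ioo 0 (p ^ d)).image (· • x)} : Finset G) ⊆
      I.biUnion fun i => {x : G | p ^ (e + d) • x = 0 ∧ i • x = y} := by
    intro x hx
    obtain ⟨hxord, hxy⟩ := (mem_filter_univ _).1 hx
    obtain ⟨i, hi, rfl⟩ := mem_image.1 hxy
    have hgcd : (p ^ (e + d)).gcd i = p ^ a := by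
      rw [← ha, ← hxord, addOrderOf_gcd_eq_div (hxord ▸ hpos)]
    exact mem_biUnion.2 ⟨i, mem_filter.2 ⟨mem_range.2 (mem_Ioo.1 hi).2, hgcd⟩,
      (mem_filter_univ _).2 ⟨hxord ▸ addOrderOf_nsmul_eq_zero x, rfl⟩⟩
  calc #{x : G | addOrderOf x = p ^ (e + d) ∧ y ∈ (Ioo 0 (p ^ d)).image (· • x)}
      ≤ #I * p ^ a := (card_le_card hcover).trans <| card_biUnion_le_card_mul _ _ _ fun i hi =>
        (card_filter_nsmul_eq_le_gcd_s12 hpos i y).trans_eq (mem_filter.1 hi).2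
    _ ≤ φ (p ^ d) := card_filter_gcd_eq_mul_le_totient hp had (Nat.le_add_left d e)

namespace MeetsMultiplesBelow

variable {p d : ℕ} {B : Finset G}

theorem pow_le_card_filter_layer (hB : MeetsMultiplesBelow (p ^ d) (B : Set G)) (hp : p.Prime)
    (hd : 0 < d) {e : ℕ} (he : p ^ (e + d) ∣ Fintype.card G) :
    p ^ e ≤ #{y ∈ B | p ^ (e + d) • y = 0 ∧ p ^ e • y ≠ 0} := by
  set layer : Finset G := {y ∈ B | p ^ (e + d) • y = 0 ∧ p ^ e • y ≠ 0}
  set X : Finset G := {x | addOrderOf x = p ^ (e + d)} with hX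
  have hcount : #X * 1 ≤ #layer * φ (p ^ d) := by
    refine card_mul_le_card_mul (fun x y => y ∈ (Ioo 0 (p ^ d)).image (· • x))
      (fun x hx => ?_) (fun y hy => ?_)
    · obtain ⟨i, hi, hiB⟩ := hB x
      have hxord : addOrderOf x = p ^ (e + d) := (mem_filter.1 hx).2
      have htop : p ^ (e + d) • i • x = 0 := by
        rw [nsmul_left_comm, ← hxord, addOrderOf_nsmul_eq_zero, nsmul_zero]
      have hbot : p ^ e • i • x ≠ 0 :=
        nsmul_nsmul_ne_zero_of_addOrderOf_eq_mul (pow_pos hp.pos e) (hxord.trans (pow_add ..)) hi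
      exact card_pos.2 ⟨i • x, mem_filter.2 ⟨mem_filter.2 ⟨hiB, htop, hbot⟩, mem_image_of_mem _ hi⟩⟩
    · obtain ⟨-, htop, hbot⟩ := mem_filter.1 hy
      rw [bipartiteBelow, hX, filter_filter]
      exact card_filter_mem_image_nsmul_le_totient hp htop hbot
  rw [mul_one, hX, IsAddCyclic.card_addOrderOf_eq_totient he, totient_prime_pow_add hp hd] at hcount
  exact Nat.le_of_mul_le_mul_right hcount (Nat.totient_pos.2 (pow_pos hp.pos d))

theorem pow_le_mul_card_filter_torsion (hB : MeetsMultiplesBelow (p ^ d) (B : Set G))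
    (hp : p.Prime) (hd : 0 < d) {k : ℕ} (hk : p ^ k ∣ Fintype.card G) :
    p ^ k ≤ (p ^ d - 1) * #{y ∈ B | p ^ k • y = 0} := by
  induction k using Nat.strong_induction_on with
  | _ k ih =>
  obtain hkd | hdk := Nat.lt_or_ge k d
  · have hzero : 0 < #{y ∈ B | p ^ k • y = 0} :=
      card_pos.2 ⟨0, mem_filter.2 ⟨hB.zero_mem, nsmul_zero _⟩⟩
    exact (Nat.le_sub_one_of_lt (Nat.pow_lt_pow_right hp.one_lt hkd)).trans
      (Nat.le_mul_of_pos_right _ hzero)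
  obtain ⟨e, rfl⟩ := Nat.exists_eq_add_of_le' hdk
  have hinner := ih e (Nat.lt_add_of_pos_right hd)
    ((pow_dvd_pow p (Nat.le_add_right e d)).trans hk)
  have hlayer := hB.pow_le_card_filter_layer hp hd hk
  have hsplit : #{y ∈ B | p ^ (e + d) • y = 0} =
      #{y ∈ B | p ^ e • y = 0} + #{y ∈ B | p ^ (e + d) • y = 0 ∧ p ^ e • y ≠ 0} := by
    have htorsion (y : G) (hy : p ^ e • y = 0) : p ^ (e + d) • y = 0 := by
      rw [pow_add, mul_nsmul, hy, nsmul_zero]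
    rw [← card_filter_add_card_filter_not (fun y => p ^ e • y = 0), filter_filter, filter_filter]
    simp only [and_iff_right_of_imp (htorsion _)]
  calc p ^ (e + d) = p ^ e + (p ^ d - 1) * p ^ e := by
        rw [← one_add_mul, Nat.add_sub_cancel' (Nat.one_le_pow _ _ hp.pos), pow_add, mul_comm]
    _ ≤ (p ^ d - 1) * #{y ∈ B | p ^ (e + d) • y = 0} := by
        rw [hsplit, mul_add]
        gcongr

end MeetsMultiplesBelow

end Cyclic

theorem stmt_12 (p d l : ℕ) (hp : p.Prime) (hd : 1 ≤ d) (hl : 1 ≤ l)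
    (A : Finset (ZMod (p ^ l)))
    (hA : ¬ ∃ x : ZMod (p ^ l), ∀ i : ℕ, 1 ≤ i → i ≤ p ^ d - 1 → i • x ∈ A) :
    (p ^ d - 1) * A.card ≤ (p ^ d - 2) * p ^ l := by
  have : NeZero (p ^ l) := ⟨pow_ne_zero l hp.ne_zero⟩
  have hmeets : MeetsMultiplesBelow (p ^ d) ((Aᶜ : Finset _) : Set (ZMod (p ^ l))) := by
    intro x
    by_contra! hx
    exact hA ⟨x, fun i hi hi' => by simpa using hx i (mem_Ioo.2 (by lia))⟩
  have hcompl : p ^ l ≤ (p ^ d - 1) * #Aᶜ :=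
    (hmeets.pow_le_mul_card_filter_torsion hp hd (ZMod.card _).symm.dvd).trans
      (Nat.mul_le_mul_left _ (card_filter_le _ _))
  have hcard : #A + #Aᶜ = p ^ l := (card_add_card_compl A).trans (ZMod.card _)
  calc (p ^ d - 1) * #A = (p ^ d - 1) * p ^ l - (p ^ d - 1) * #Aᶜ :=
        Nat.eq_sub_of_add_eq (by rw [← mul_add, hcard])
    _ ≤ (p ^ d - 1) * p ^ l - p ^ l := Nat.sub_le_sub_left hcompl _
    _ = (p ^ d - 2) * p ^ l := by rw [← Nat.sub_one_mul, Nat.sub_sub]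
end

section
/- Let N ≥ 1 be an integer and let A be a subset of Z_N such that A ∩ (2·A) = ∅, where 2·A = {2a : a ∈ A}. Then 3·|A| ≤ 2·N (i.e., |A| ≤ 2N/3). -/
/-!
In a finite cyclic group the equation `n • a = 0` has at most `n` solutions, so `a ↦ n • a` is at
most `n`-to-one and the dilate `n • A` has at least `|A| / n` elements. If it is disjoint from `A`,
then `|A| + |A| / n` is at most the order of the group.
-/

open Finset

theorem succ_mul_card_le_mul_card_of_disjoint_image {α : Type*} [Fintype α] [DecidableEq α]
    {f : α → α} {A : Finset α} {k : ℕ} (hf : ∀ b ∈ A.image f, #{a ∈ A | f a = b} ≤ k)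
    (hA : Disjoint A (A.image f)) : (k + 1) * #A ≤ k * Fintype.card α :=
  calc
    (k + 1) * #A = k * #A + #A := Nat.succ_mul k #A
    _ ≤ k * #A + k * #(A.image f) := by
      gcongr
      exact card_le_mul_card_image A k hf
    _ = k * #(A ∪ A.image f) := by rw [card_union_of_disjoint hA, mul_add]
    _ ≤ k * Fintype.card α := by
      gcongr
      exact card_le_univ _

theorem card_fiber_le_card_fiber_zero {G M : Type*} [AddGroup G] [Fintype G] [AddMonoid M]
    [DecidableEq M] (f : G →+ M) (b : M) : #{a | f a = b} ≤ #{a | f a = 0} := by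
  by_cases hb : b ∈ Set.range f
  · exact (AddMonoidHom.card_fiber_eq_of_mem_range f hb ⟨0, map_zero f⟩).le
  · have fiber_empty : ({a | f a = b} : Finset G) = ∅ :=
      filter_eq_empty_iff.mpr fun a _ hab ↦ hb ⟨a, hab⟩
    simp only [fiber_empty, card_empty, zero_le]

section Cyclic

variable {G : Type*} [AddCommGroup G] [IsAddCyclic G] [Fintype G] [DecidableEq G] {n : ℕ}

theorem card_nsmul_eq_le (hn : 0 < n) (b : G) : #{a : G | n • a = b} ≤ n :=
  (card_fiber_le_card_fiber_zero (nsmulAddMonoidHom n) b).trans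
    (IsAddCyclic.card_nsmul_eq_zero_le hn)

theorem stmt_14_general (hn : 0 < n) {A : Finset G} (hA : Disjoint A (A.image (n • ·))) :
    (n + 1) * #A ≤ n * Fintype.card G :=
  succ_mul_card_le_mul_card_of_disjoint_image
    (fun b _ ↦ (card_le_card (filter_subset_filter _ (subset_univ A))).trans
      (card_nsmul_eq_le hn b)) hA

end Cyclic

theorem stmt_14 (N : ℕ) (hN : 1 ≤ N) (A : Finset (ZMod N))
    (h : A ∩ A.image (fun a => a + a) = ∅) :
    3 * A.card ≤ 2 * N := by
  have : NeZero N := ⟨Nat.one_le_iff_ne_zero.mp hN⟩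
  simp only [← two_nsmul, ← disjoint_iff_inter_eq_empty] at h
  simpa only [ZMod.card] using stmt_14_general two_pos h
end

section
/- Let p be a prime and let d ≥ 1, l ≥ 1, and a ≥ 1 be integers with a ≤ l − d + 1. For an integer i with 1 ≤ i ≤ l, define the layer L_i = {x ∈ Z_{p^l} : p^{i−1} divides x and p^i does not divide x} (where divisibility is tested on the representative of x in {0, 1, …, p^l − 1}), and write L_{[a, a+d−1]} = L_a ∪ L_{a+1} ∪ ⋯ ∪ L_{a+d−1}. If A is a subset of Z_{p^l} that is {x, 2x, …, (p^d − 1)x}-free, then (p^d − 1)·|A ∩ L_{[a, a+d−1]}| ≤ (p^d − 2)·|L_{[a, a+d−1]}|. -/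
/-- The layer `L_i ⊆ ZMod (p ^ l)`: elements whose representative in `{0, …, p^l - 1}`
is divisible by `p^(i-1)` but not by `p^i`. -/
def layer (p l i : ℕ) : Set (ZMod (p ^ l)) :=
  {x : ZMod (p ^ l) | p ^ (i - 1) ∣ x.val ∧ ¬ p ^ i ∣ x.val}

/-- The block of layers `L_{[a, a+d-1]} = L_a ∪ L_{a+1} ∪ ⋯ ∪ L_{a+d-1}`. -/
def layerBlock (p l a d : ℕ) : Set (ZMod (p ^ l)) :=
  ⋃ i ∈ Set.Icc a (a + d - 1), layer p l i

/-!
For `x ∈ L_a` all the multiples `x, 2x, …, (p^d - 1)x` lie in the block `L_{[a, a+d-1]}`, and these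
progressions cover the block uniformly. Indeed, for `y ∈ L_{a+j}` the solutions of `i • x = y` with
`x ∈ L_a` have `v_p(i) = j`; there are `φ(p^(d-j))` such `i < p^d`, each with `p^j` solutions `x`,
and `φ(p^(d-j)) * p^j = φ(p^d)` does not depend on `j`. Since the complement of a free set `A`
in the block meets every progression, it makes up at least a fraction `1 / (p^d - 1)` of the block.
-/

open Finset

section DoubleCounting

variable {ι α β : Type*} [DecidableEq β] {I : Finset ι} {S : Finset α} {B T : Finset β}
  {f : ι → α → β} {c : ℕ}

lemma card_filter_mem_eq_mul_of_card_fiber_eq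
    (hfiber : ∀ y ∈ B, #{q ∈ I ×ˢ S | f q.1 q.2 = y} = c) (hT : T ⊆ B) :
    #{q ∈ I ×ˢ S | f q.1 q.2 ∈ T} = #T * c := by
  rw [← sum_card_fiberwise_eq_card_filter, sum_const_nat fun y hy ↦ hfiber y (hT hy)]

lemma card_le_card_mul_card_of_card_fiber_eq (hc : 0 < c)
    (hfiber : ∀ y ∈ B, #{q ∈ I ×ˢ S | f q.1 q.2 = y} = c) (hTB : T ⊆ B)
    (hT : ∀ x ∈ S, ∃ i ∈ I, f i x ∈ T) : #B ≤ #I * #T := by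
  have hS : #S ≤ #T * c := by
    rw [← card_filter_mem_eq_mul_of_card_fiber_eq hfiber hTB]
    refine card_le_card_of_surjOn Prod.snd fun x hx ↦ ?_
    obtain ⟨i, hi, hix⟩ := hT x hx
    exact ⟨(i, x), by simpa using ⟨⟨hi, hx⟩, hix⟩, rfl⟩
  refine Nat.le_of_mul_le_mul_right ?_ hc
  calc
    #B * c = #{q ∈ I ×ˢ S | f q.1 q.2 ∈ B} :=
      (card_filter_mem_eq_mul_of_card_fiber_eq hfiber Subset.rfl).symm
    _ ≤ #(I ×ˢ S) := card_filter_le _ _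
    _ = #I * #S := card_product I S
    _ ≤ #I * (#T * c) := Nat.mul_le_mul_left _ hS
    _ = #I * #T * c := (mul_assoc _ _ _).symm

end DoubleCounting

section LinearCongruence

variable {n : ℕ} [NeZero n]

lemma exists_nsmul_eq_of_gcd_dvd_val {i : ℕ} {y : ZMod n} (h : n.gcd i ∣ y.val) :
    ∃ x : ZMod n, i • x = y := by
  obtain ⟨w, hw⟩ := h
  have bezout : (i : ZMod n) * (i : ZMod n)⁻¹ = n.gcd i := by
    rw [ZMod.mul_inv_eq_gcd, ZMod.val_natCast, ← Nat.gcd_rec]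
  refine ⟨(i : ZMod n)⁻¹ * w, ?_⟩
  rw [nsmul_eq_mul, ← mul_assoc, bezout, ← Nat.cast_mul, ← hw, ZMod.natCast_zmod_val]

lemma card_nsmul_eq_zero_eq_gcd (i : ℕ) : #{x : ZMod n | i • x = 0} = n.gcd i := by
  rw [← Fintype.card_subtype, ← Nat.card_eq_fintype_card]
  exact (IsAddCyclic.card_nsmulAddMonoidHom_ker (ZMod n) i).trans (by rw [Nat.card_zmod])

lemma card_nsmul_eq_eq_gcd {i : ℕ} {y : ZMod n} (h : n.gcd i ∣ y.val) :
    #{x : ZMod n | i • x = y} = n.gcd i := by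
  rw [← card_nsmul_eq_zero_eq_gcd]
  exact AddMonoidHom.card_fiber_eq_of_mem_range (nsmulAddMonoidHom i)
    (exists_nsmul_eq_of_gcd_dvd_val h) ⟨0, nsmul_zero i⟩

end LinearCongruence

section PrimePower

variable {p : ℕ} [Fact p.Prime] {d i j : ℕ}

lemma gcd_prime_pow_eq_pow_padicValNat (hi : i ≠ 0) (h : padicValNat p i ≤ d) :
    (p ^ d).gcd i = p ^ padicValNat p i := by
  obtain ⟨k, -, hk⟩ := (Nat.dvd_prime_pow Fact.out).1 (Nat.gcd_dvd_left (p ^ d) i)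
  refine Nat.dvd_antisymm ?_ (Nat.dvd_gcd (pow_dvd_pow p h) pow_padicValNat_dvd)
  rw [hk]
  exact pow_dvd_pow p ((padicValNat_dvd_iff_le hi).1 (hk ▸ Nat.gcd_dvd_right _ _))

lemma padicValNat_lt_of_lt_pow (hi : i ≠ 0) (h : i < p ^ d) : padicValNat p i < d :=
  (Nat.pow_lt_pow_iff_right (Fact.out : p.Prime).one_lt).1 <|
    (Nat.le_of_dvd (Nat.pos_of_ne_zero hi) pow_padicValNat_dvd).trans_lt h

lemma card_padicValNat_eq_eq_totient (hj : j < d) :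
    #{i ∈ Ioo 0 (p ^ d) | padicValNat p i = j} = (p ^ (d - j)).totient := by
  have hp : p.Prime := Fact.out
  rw [← Nat.pow_div hj.le hp.pos, Nat.totient_div_of_dvd (pow_dvd_pow p hj.le)]
  congr 1
  ext i
  rcases eq_or_ne i 0 with rfl | hi
  · simp [Nat.pow_right_inj hp.two_le, hj.ne']
  · simp only [mem_filter, mem_Ioo, mem_range, Nat.pos_of_ne_zero hi, true_and]
    refine and_congr_right fun hid ↦ ?_
    rw [gcd_prime_pow_eq_pow_padicValNat hi (padicValNat_lt_of_lt_pow hi hid).le,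
      Nat.pow_right_inj hp.two_le]

lemma totient_prime_pow_sub_mul_pow (hj : j < d) :
    (p ^ (d - j)).totient * p ^ j = (p ^ d).totient := by
  have hp : p.Prime := Fact.out
  rw [Nat.totient_prime_pow hp (Nat.sub_pos_of_lt hj), Nat.totient_prime_pow hp (by lia),
    mul_right_comm, ← pow_add, show d - j - 1 + j = d - 1 by lia]

end PrimePower

section Layer

variable {p l a d i j : ℕ}

lemma eq_of_mem_layer {x : ZMod (p ^ l)} (hi : x ∈ layer p l i) (hj : x ∈ layer p l j) :
    i = j := by
  by_contra hij
  rcases Nat.lt_or_gt_of_ne hij with h | h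
  · exact hi.2 ((pow_dvd_pow p (Nat.le_sub_one_of_lt h)).trans hj.1)
  · exact hj.2 ((pow_dvd_pow p (Nat.le_sub_one_of_lt h)).trans hi.1)

lemma mem_layerBlock_iff (hd : 1 ≤ d) {y : ZMod (p ^ l)} :
    y ∈ layerBlock p l a d ↔ ∃ j < d, y ∈ layer p l (a + j) := by
  simp only [layerBlock, Set.mem_iUnion, Set.mem_Icc, exists_prop]
  constructor
  · rintro ⟨i, hi, hy⟩
    exact ⟨i - a, by lia, by rwa [Nat.add_sub_cancel' hi.1]⟩
  · rintro ⟨j, hj, hy⟩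
    exact ⟨a + j, by lia, hy⟩

variable [Fact p.Prime]

lemma natCast_mem_layer_iff (hi : 1 ≤ i) (hil : i ≤ l) (n : ℕ) :
    (n : ZMod (p ^ l)) ∈ layer p l i ↔ n ≠ 0 ∧ padicValNat p n + 1 = i := by
  have hdvd {k : ℕ} (hk : k ≤ l) : p ^ k ∣ (n : ZMod (p ^ l)).val ↔ p ^ k ∣ n := by
    rw [ZMod.val_natCast, Nat.dvd_mod_iff (pow_dvd_pow p hk)]
  rw [layer, Set.mem_ofPred_eq, hdvd (by lia), hdvd hil]
  rcases eq_or_ne n 0 with rfl | hn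
  · simp
  · rw [padicValNat_dvd_iff_le hn, padicValNat_dvd_iff_le hn]
    lia

lemma nsmul_mem_layer_iff (hi : i ≠ 0) (ha : 1 ≤ a) (hal : a + padicValNat p i ≤ l)
    {x : ZMod (p ^ l)} : i • x ∈ layer p l (a + padicValNat p i) ↔ x ∈ layer p l a := by
  rw [← ZMod.natCast_zmod_val x, nsmul_eq_mul, ← Nat.cast_mul,
    natCast_mem_layer_iff (by lia) hal, natCast_mem_layer_iff ha (by lia)]
  rcases eq_or_ne x.val 0 with hx | hx
  · simp [hx]
  · rw [padicValNat.mul hi hx]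
    simp only [ne_eq, mul_eq_zero, hi, hx, or_self, not_false_eq_true, true_and]
    lia

open Classical in
lemma card_layer_nsmul_eq (ha : 1 ≤ a) (hi : i ≠ 0) (hal : a + padicValNat p i ≤ l)
    {y : ZMod (p ^ l)} (hy : y ∈ layer p l (a + j)) :
    #{x | x ∈ layer p l a ∧ i • x = y} = if padicValNat p i = j then p ^ j else 0 := by
  split_ifs with hij
  · subst hij
    have hgcd : (p ^ l).gcd i = p ^ padicValNat p i :=
      gcd_prime_pow_eq_pow_padicValNat hi (by lia)
    rw [← hgcd, ← card_nsmul_eq_eq_gcd (hgcd ▸ (pow_dvd_pow p (by lia)).trans hy.1)]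
    congr 1
    ext x
    simp only [mem_filter, mem_univ, true_and, and_iff_right_iff_imp]
    rintro rfl
    exact (nsmul_mem_layer_iff hi ha hal).1 hy
  · rw [card_eq_zero, filter_eq_empty_iff]
    rintro x - ⟨hx, rfl⟩
    exact hij (Nat.add_left_cancel (eq_of_mem_layer ((nsmul_mem_layer_iff hi ha hal).2 hx) hy))

lemma nsmul_mem_layerBlock (ha : 1 ≤ a) (hal : a + d ≤ l + 1) {x : ZMod (p ^ l)}
    (hx : x ∈ layer p l a) (hi : i ≠ 0) (hid : i < p ^ d) : i • x ∈ layerBlock p l a d := by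
  have hv := padicValNat_lt_of_lt_pow hi hid
  exact (mem_layerBlock_iff (by lia)).2 ⟨_, hv, (nsmul_mem_layer_iff hi ha (by lia)).2 hx⟩

open Classical in
lemma card_nsmul_fiber_eq_totient (hd : 1 ≤ d) (ha : 1 ≤ a) (hal : a + d ≤ l + 1)
    {y : ZMod (p ^ l)} (hy : y ∈ layerBlock p l a d) :
    #{q ∈ Ioo 0 (p ^ d) ×ˢ ({x | x ∈ layer p l a} : Finset (ZMod (p ^ l))) | q.1 • q.2 = y} =
      (p ^ d).totient := by
  obtain ⟨j, hj, hyj⟩ := (mem_layerBlock_iff hd).1 hy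
  have hcount : ∀ i ∈ Ioo 0 (p ^ d), #{x | x ∈ layer p l a ∧ i • x = y} =
      if padicValNat p i = j then p ^ j else 0 := by
    intro i hi
    obtain ⟨hi0, hid⟩ := mem_Ioo.1 hi
    have hv := padicValNat_lt_of_lt_pow hi0.ne' hid
    exact card_layer_nsmul_eq ha hi0.ne' (by lia) hyj
  calc
    _ = ∑ i ∈ Ioo 0 (p ^ d), #{x | x ∈ layer p l a ∧ i • x = y} := by
      simp only [card_filter, sum_product, sum_filter, ite_and]
    _ = #{i ∈ Ioo 0 (p ^ d) | padicValNat p i = j} * p ^ j := by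
      rw [sum_congr rfl hcount, ← sum_filter, sum_const, smul_eq_mul]
    _ = (p ^ d).totient := by
      rw [card_padicValNat_eq_eq_totient hj, totient_prime_pow_sub_mul_pow hj]

lemma ncard_layerBlock_le_mul_ncard (hd : 1 ≤ d) (ha : 1 ≤ a) (hal : a + d ≤ l + 1)
    {T : Set (ZMod (p ^ l))} (hTB : T ⊆ layerBlock p l a d)
    (hT : ∀ x ∈ layer p l a, ∃ i ∈ Ioo 0 (p ^ d), i • x ∈ T) :
    (layerBlock p l a d).ncard ≤ (p ^ d - 1) * T.ncard := by
  classical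
  have h := card_le_card_mul_card_of_card_fiber_eq (c := (p ^ d).totient)
    (B := (layerBlock p l a d).toFinset) (T := T.toFinset)
    (Nat.totient_pos.2 (NeZero.pos _))
    (fun y hy ↦ card_nsmul_fiber_eq_totient hd ha hal (Set.mem_toFinset.1 hy))
    (Set.toFinset_subset_toFinset.2 hTB) (by simpa using hT)
  rwa [Nat.card_Ioo, Nat.sub_zero, ← Set.ncard_eq_toFinset_card',
    ← Set.ncard_eq_toFinset_card'] at h

end Layer

theorem stmt_15 (p l d a : ℕ) (hp : p.Prime) (hl : 1 ≤ l) (hd : 1 ≤ d)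
    (ha : 1 ≤ a) (hal : a + d ≤ l + 1)
    (A : Set (ZMod (p ^ l)))
    (hA : ¬ ∃ x : ZMod (p ^ l), ∀ i : ℕ, 1 ≤ i → i ≤ p ^ d - 1 → i • x ∈ A) :
    (p ^ d - 1) * (A ∩ layerBlock p l a d).ncard
      ≤ (p ^ d - 2) * (layerBlock p l a d).ncard := by
  have : Fact p.Prime := ⟨hp⟩
  have hcompl : (layerBlock p l a d).ncard ≤ (p ^ d - 1) * (layerBlock p l a d \ A).ncard := by
    refine ncard_layerBlock_le_mul_ncard hd ha hal Set.sdiff_subset fun x hx ↦ ?_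
    push Not at hA
    obtain ⟨i, hi, hid, hix⟩ := hA x
    have hid' : i < p ^ d := by lia
    exact ⟨i, mem_Ioo.2 ⟨hi, hid'⟩, nsmul_mem_layerBlock ha hal hx (by lia) hid', hix⟩
  have hsplit := Set.ncard_inter_add_ncard_sdiff_eq_ncard (layerBlock p l a d) A
  have htwo : 2 ≤ p ^ d := hp.two_le.trans (Nat.le_self_pow (by lia) p)
  obtain ⟨m, hm⟩ := Nat.exists_eq_add_of_le' htwo
  rw [Set.inter_comm, ← hsplit, hm, Nat.add_sub_cancel, show m + 2 - 1 = m + 1 from rfl]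
  rw [← hsplit, hm, show m + 2 - 1 = m + 1 from rfl] at hcompl
  linarith
end

section
/- Let p be a prime, l ≥ 1 and k ≥ 1 integers with k ≤ l, and set d = p^k and N = p^l (so d divides N). If A is a subset of Z_N that is {x, 2x, …, (d−1)x}-free, then d·|A| ≤ (d−1)·N (i.e., |A| ≤ (d−1)N/d); that is, the conjectured bound for {x, 2x, …, (d−1)x}-free sets holds when N is a prime power. -/
/-!
Let `d = p ^ k`, `N = p ^ l`, and let `B` be the complement of `A`. For a uniformly random unit `u`
of `ZMod N`, the element `i * u` is uniformly distributed over the elements of the same additive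
order as `i`, and some `i * u` with `0 < i < d` lies in `B`. The union bound, regrouped by the
elements of `B`, reads
`1 ≤ ∑ b ∈ B, #{0 < i < d | ord i = ord b} / φ (ord b)`.
For prime powers every summand is either `0` or exactly `d / N`, because passing from `ZMod d` to
`ZMod N` multiplies both the order of such an `i` and its totient by `N / d`.
-/

open Finset MulAction

section GroupAction

variable {G X : Type*} [Group G] [MulAction G X]

open scoped Classical in
lemma card_filter_smul_eq_smul [Fintype G] (h : G) (x : X) :
    #{g : G | g • x = h • x} = Nat.card (stabilizer G x) := by
  rw [← Fintype.card_subtype, ← Nat.card_eq_fintype_card]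
  refine Nat.card_congr ((Equiv.mulLeft h⁻¹).subtypeEquiv fun g ↦ ?_)
  rw [Equiv.coe_mulLeft, mem_stabilizer_iff, mul_smul, inv_smul_eq_iff]

open scoped Classical in
lemma card_filter_smul_mem [Fintype G] (x : X) (B : Finset X) :
    #{g : G | g • x ∈ B} = #{b ∈ B | b ∈ orbit G x} * Nat.card (stabilizer G x) := by
  have maps_to_orbit : ∀ g ∈ ({g : G | g • x ∈ B} : Finset G),
      g • x ∈ ({b ∈ B | b ∈ orbit G x} : Finset X) := by
    simp
  rw [card_eq_sum_card_fiberwise maps_to_orbit]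
  refine sum_const_nat fun b hb ↦ ?_
  obtain ⟨hbB, h, rfl⟩ := mem_filter.1 hb
  rw [← card_filter_smul_eq_smul h x, filter_filter]
  exact congrArg card (filter_congr fun g _ ↦ and_iff_right_of_imp fun hg ↦ hg ▸ hbB)

open scoped Classical in
lemma card_filter_smul_mem_div_card [Fintype G] (x : X) (B : Finset X) :
    (#{g : G | g • x ∈ B} / Nat.card G : ℚ) =
      #{b ∈ B | b ∈ orbit G x} / Nat.card (orbit G x) := by
  have orbit_stabilizer : Nat.card (orbit G x) * Nat.card (stabilizer G x) = Nat.card G := by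
    rw [← Nat.card_prod, Nat.card_congr (orbitProdStabilizerEquivGroup G x)]
  have stabilizer_ne_zero : (Nat.card (stabilizer G x) : ℚ) ≠ 0 :=
    Nat.cast_ne_zero.2 Nat.card_pos.ne'
  rw [card_filter_smul_mem, ← orbit_stabilizer, Nat.cast_mul, Nat.cast_mul,
    mul_div_mul_right _ _ stabilizer_ne_zero]

open scoped Classical in
lemma one_le_sum_card_filter_mem_orbit_div [Finite G] {ι : Type*} (I : Finset ι)
    (x : ι → X) (B : Finset X) (hB : ∀ g : G, ∃ i ∈ I, g • x i ∈ B) :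
    (1 : ℚ) ≤ ∑ i ∈ I, (#{b ∈ B | b ∈ orbit G (x i)} / Nat.card (orbit G (x i)) : ℚ) := by
  have := Fintype.ofFinite G
  have cover : (univ : Finset G) ⊆ I.biUnion fun i ↦ {g | g • x i ∈ B} := fun g _ ↦ by
    simpa using hB g
  have union_bound : Nat.card G ≤ ∑ i ∈ I, #{g : G | g • x i ∈ B} := by
    simpa using (card_le_card cover).trans card_biUnion_le
  simp_rw [← card_filter_smul_mem_div_card, ← sum_div]
  rw [one_le_div (Nat.cast_pos.2 Nat.card_pos)]
  exact_mod_cast union_bound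

lemma addOrderOf_group_smul {M : Type*} [AddMonoid M] [DistribMulAction G M] (g : G) (x : M) :
    addOrderOf (g • x) = addOrderOf x :=
  addOrderOf_injective (DistribSMul.toAddMonoidHom M g) (MulAction.injective g) x

end GroupAction

section ZMod

variable {N : ℕ} [NeZero N]

lemma exists_eq_units_smul_natCast_div_addOrderOf (x : ZMod N) :
    ∃ u : (ZMod N)ˣ, x = u • ((N / addOrderOf x : ℕ) : ZMod N) := by
  obtain ⟨d, hd, _, ⟨u, rfl⟩, hx⟩ := x.eq_unit_mul_divisor
  have order_eq : addOrderOf x = N / d := by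
    rw [hx, ← smul_eq_mul, ← Units.smul_def, addOrderOf_group_smul,
      ZMod.addOrderOf_coe d (NeZero.ne N), Nat.gcd_eq_right hd]
  exact ⟨u, by rw [order_eq, Nat.div_div_self hd (NeZero.ne N), Units.smul_def, smul_eq_mul, hx]⟩

lemma mem_orbit_units_zmod_iff {x y : ZMod N} :
    y ∈ orbit (ZMod N)ˣ x ↔ addOrderOf x = addOrderOf y := by
  constructor
  · rintro ⟨u, rfl⟩
    exact (addOrderOf_group_smul u x).symm
  · intro h
    obtain ⟨u, hu⟩ := exists_eq_units_smul_natCast_div_addOrderOf x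
    obtain ⟨v, hv⟩ := exists_eq_units_smul_natCast_div_addOrderOf y
    rw [hu, hv, h]
    exact smul_mem_orbit_smul ..

lemma card_orbit_units_zmod (x : ZMod N) :
    Nat.card (orbit (ZMod N)ˣ x) = (addOrderOf x).totient := by
  have orbit_eq : orbit (ZMod N)ˣ x = ↑({y | addOrderOf y = addOrderOf x} : Finset (ZMod N)) := by
    ext y
    simp [mem_orbit_units_zmod_iff, eq_comm]
  rw [orbit_eq, Nat.card_coe_set_eq, Set.ncard_coe_finset,
    IsAddCyclic.card_addOrderOf_eq_totient (addOrderOf_dvd_card (x := x))]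

lemma one_le_sum_card_filter_addOrderOf_eq_div_totient {ι : Type*} (I : Finset ι) (x : ι → ZMod N)
    (B : Finset (ZMod N)) (hB : ∀ u : (ZMod N)ˣ, ∃ i ∈ I, u • x i ∈ B) :
    (1 : ℚ) ≤ ∑ b ∈ B, (#{i ∈ I | addOrderOf (x i) = addOrderOf b} /
      (addOrderOf b).totient : ℚ) := by
  classical
  calc
    (1 : ℚ) ≤ ∑ i ∈ I, (#{b ∈ B | addOrderOf (x i) = addOrderOf b} /
        (addOrderOf (x i)).totient : ℚ) := by
      simpa only [mem_orbit_units_zmod_iff, card_orbit_units_zmod, filter_congr_decidable]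
        using one_le_sum_card_filter_mem_orbit_div I x B hB
    _ = ∑ i ∈ I, ∑ b ∈ B with addOrderOf (x i) = addOrderOf b,
        (1 / (addOrderOf b).totient : ℚ) := by
      refine sum_congr rfl fun i _ ↦ ?_
      rw [sum_congr rfl fun b hb ↦ by rw [← (mem_filter.1 hb).2], sum_const, nsmul_eq_mul,
        mul_one_div]
    _ = ∑ b ∈ B, ∑ i ∈ I with addOrderOf (x i) = addOrderOf b,
        (1 / (addOrderOf b).totient : ℚ) :=
      sum_comm' fun i b ↦ by simp only [mem_filter]; tauto
    _ = ∑ b ∈ B, (#{i ∈ I | addOrderOf (x i) = addOrderOf b} /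
        (addOrderOf b).totient : ℚ) := by
      simp_rw [sum_const, nsmul_eq_mul, mul_one_div]

lemma card_filter_range_addOrderOf_natCast_eq_le_totient (n : ℕ) :
    #{i ∈ range N | addOrderOf ((i : ℕ) : ZMod N) = n} ≤ n.totient := by
  rcases eq_empty_or_nonempty {i ∈ range N | addOrderOf ((i : ℕ) : ZMod N) = n} with h | ⟨j, hj⟩
  · simp [h]
  obtain ⟨-, rfl⟩ := mem_filter.1 hj
  rw [← IsAddCyclic.card_addOrderOf_eq_totient (addOrderOf_dvd_card (x := (j : ZMod N)))]
  refine card_le_card_of_injOn Nat.cast (fun i hi ↦ by simp_all) fun i hi j hj hij ↦ ?_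
  simp only [coe_filter, mem_range, Set.mem_ofPred_eq] at hi hj
  exact ((ZMod.natCast_eq_natCast_iff _ _ _).1 hij).eq_of_lt_of_lt hi.1 hj.1

end ZMod

section PrimePow

variable {p k l i : ℕ}

lemma gcd_prime_pow_eq_gcd_prime_pow (hp : p.Prime) (hkl : k ≤ l) (hi : ¬ p ^ k ∣ i) :
    (p ^ l).gcd i = (p ^ k).gcd i := by
  refine Nat.dvd_antisymm (Nat.dvd_gcd ?_ (Nat.gcd_dvd_right _ _))
    (Nat.gcd_dvd_gcd_of_dvd_left _ (pow_dvd_pow p hkl))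
  obtain ⟨w, -, hw⟩ := (Nat.dvd_prime_pow hp).1 (Nat.gcd_dvd_left (p ^ l) i)
  have w_lt : w < k := by
    by_contra! hkw
    exact hi ((pow_dvd_pow p hkw).trans (hw ▸ Nat.gcd_dvd_right _ _))
  exact hw ▸ pow_dvd_pow p w_lt.le

lemma addOrderOf_natCast_zmod_prime_pow (hp : p.Prime) (hkl : k ≤ l) (hi : ¬ p ^ k ∣ i) :
    addOrderOf (i : ZMod (p ^ l)) = p ^ (l - k) * addOrderOf (i : ZMod (p ^ k)) := by
  rw [ZMod.addOrderOf_coe i (pow_ne_zero l hp.ne_zero),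
    ZMod.addOrderOf_coe i (pow_ne_zero k hp.ne_zero),
    gcd_prime_pow_eq_gcd_prime_pow hp hkl hi, ← Nat.mul_div_assoc _ (Nat.gcd_dvd_left _ _),
    pow_sub_mul_pow p hkl]

lemma prime_dvd_addOrderOf_natCast_zmod_prime_pow (hp : p.Prime) (hi : ¬ p ^ k ∣ i) :
    p ∣ addOrderOf (i : ZMod (p ^ k)) := by
  have order_dvd : addOrderOf (i : ZMod (p ^ k)) ∣ p ^ k :=
    addOrderOf_dvd_of_nsmul_eq_zero (by simp)
  obtain ⟨j, -, hj⟩ := (Nat.dvd_prime_pow hp).1 order_dvd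
  rw [hj]
  refine dvd_pow_self p ?_
  rintro rfl
  rw [pow_zero, AddMonoid.addOrderOf_eq_one_iff, ZMod.natCast_eq_zero_iff] at hj
  exact hi hj

lemma totient_prime_pow_mul_of_dvd {m : ℕ} (hp : p.Prime) (hm : p ∣ m) (n : ℕ) :
    (p ^ n * m).totient = p ^ n * m.totient := by
  induction n with
  | zero => simp
  | succ n ih =>
    rw [pow_succ', mul_assoc, Nat.totient_mul_of_prime_of_dvd hp (hm.mul_left _), ih, mul_assoc]

lemma card_filter_Ico_addOrderOf_natCast_zmod_prime_pow_le (hp : p.Prime) (hkl : k ≤ l) (n : ℕ) :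
    p ^ (l - k) * #{i ∈ Ico 1 (p ^ k) | addOrderOf ((i : ℕ) : ZMod (p ^ l)) = n} ≤ n.totient := by
  have : NeZero (p ^ k) := ⟨pow_ne_zero k hp.ne_zero⟩
  have not_dvd {i : ℕ} (hi : i ∈ Ico 1 (p ^ k)) : ¬ p ^ k ∣ i :=
    Nat.not_dvd_of_pos_of_lt (mem_Ico.1 hi).1 (mem_Ico.1 hi).2
  rcases eq_empty_or_nonempty {i ∈ Ico 1 (p ^ k) | addOrderOf ((i : ℕ) : ZMod (p ^ l)) = n}
    with h | ⟨j, hj⟩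
  · simp [h]
  obtain ⟨hjk, rfl⟩ := mem_filter.1 hj
  rw [addOrderOf_natCast_zmod_prime_pow hp hkl (not_dvd hjk), totient_prime_pow_mul_of_dvd hp
    (prime_dvd_addOrderOf_natCast_zmod_prime_pow hp (not_dvd hjk))]
  gcongr
  refine le_trans (card_le_card fun i hi ↦ ?_)
    (card_filter_range_addOrderOf_natCast_eq_le_totient (N := p ^ k) _)
  obtain ⟨hik, hij⟩ := mem_filter.1 hi
  rw [addOrderOf_natCast_zmod_prime_pow hp hkl (not_dvd hik)] at hij
  exact mem_filter.2 ⟨mem_range.2 (mem_Ico.1 hik).2,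
    Nat.eq_of_mul_eq_mul_left (pow_pos hp.pos _) hij⟩

lemma prime_pow_sub_le_card_of_forall_units_exists_nsmul_mem (hp : p.Prime) (hkl : k ≤ l)
    (B : Finset (ZMod (p ^ l)))
    (hB : ∀ u : (ZMod (p ^ l))ˣ, ∃ i ∈ Ico 1 (p ^ k), i • (u : ZMod (p ^ l)) ∈ B) :
    p ^ (l - k) ≤ #B := by
  have : NeZero (p ^ l) := ⟨pow_ne_zero l hp.ne_zero⟩
  have units_smul_mem (u : (ZMod (p ^ l))ˣ) :
      ∃ i ∈ Ico 1 (p ^ k), u • (i : ZMod (p ^ l)) ∈ B := by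
    simpa only [Units.smul_def, smul_eq_mul, nsmul_eq_mul, mul_comm] using hB u
  have index_pos : (0 : ℚ) < p ^ (l - k) := pow_pos (Nat.cast_pos.2 hp.pos) _
  have summand_le (b : ZMod (p ^ l)) :
      (#{i ∈ Ico 1 (p ^ k) | addOrderOf ((i : ℕ) : ZMod (p ^ l)) = addOrderOf b} /
        (addOrderOf b).totient : ℚ) ≤ 1 / p ^ (l - k) := by
    rw [div_le_div_iff₀ (Nat.cast_pos.2 (Nat.totient_pos.2 (addOrderOf_pos b))) index_pos,
      mul_comm, one_mul]
    exact_mod_cast card_filter_Ico_addOrderOf_natCast_zmod_prime_pow_le hp hkl (addOrderOf b)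
  have one_le : (1 : ℚ) ≤ #B / p ^ (l - k) := by
    simpa only [sum_const, nsmul_eq_mul, mul_one_div] using
      (one_le_sum_card_filter_addOrderOf_eq_div_totient _ Nat.cast B units_smul_mem).trans
        (sum_le_sum fun b _ ↦ summand_le b)
  exact_mod_cast (one_le_div index_pos).1 one_le

end PrimePow

theorem stmt_16_general (p l k : ℕ) (hp : p.Prime) (hkl : k ≤ l) (A : Finset (ZMod (p ^ l)))
    (hA : ¬ ∃ u : (ZMod (p ^ l))ˣ, ∀ i : ℕ, 1 ≤ i → i ≤ p ^ k - 1 → i • (u : ZMod (p ^ l)) ∈ A) :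
    p ^ k * A.card ≤ (p ^ k - 1) * p ^ l := by
  have : NeZero (p ^ l) := ⟨pow_ne_zero l hp.ne_zero⟩
  have compl_blocks (u : (ZMod (p ^ l))ˣ) :
      ∃ i ∈ Ico 1 (p ^ k), i • (u : ZMod (p ^ l)) ∈ Aᶜ := by
    by_contra! h
    exact hA ⟨u, fun i hi hik ↦ by_contra fun hiA ↦
      h i (mem_Ico.2 ⟨hi, by omega⟩) (mem_compl.2 hiA)⟩
  have card_compl_ge : p ^ (l - k) ≤ #Aᶜ :=
    prime_pow_sub_le_card_of_forall_units_exists_nsmul_mem hp hkl Aᶜ compl_blocks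
  have card_add : #A + #Aᶜ = p ^ l := by rw [card_add_card_compl, ZMod.card]
  calc
    p ^ k * #A ≤ p ^ k * (p ^ l - p ^ (l - k)) := by
      gcongr
      omega
    _ = (p ^ k - 1) * p ^ l := by
      rw [Nat.mul_sub, Nat.sub_mul, one_mul, pow_mul_pow_sub p hkl]

theorem stmt_16 (p l k : ℕ) (hp : p.Prime) (hk : 1 ≤ k) (hkl : k ≤ l)
    (A : Finset (ZMod (p ^ l)))
    (hA : ¬ ∃ x : ZMod (p ^ l), ∀ i : ℕ, 1 ≤ i → i ≤ p ^ k - 1 → i • x ∈ A) :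
    p ^ k * A.card ≤ (p ^ k - 1) * p ^ l :=
  stmt_16_general p l k hp hkl A fun ⟨u, hu⟩ ↦ hA ⟨u, hu⟩
end
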